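/- arXiv:1902.07657 — 8 statements merged into one kernel-verified Lean document; each statement's English description precedes it below -/
import Mathlib

section
/- Hairy Ball Theorem (Poincaré–Brouwer): If k ≥ 2 is even, then for every continuous tangent vector field f : S^k → ℝ^{k+1} (i.e., f continuous with ⟨f(x), x⟩ = 0 for all x ∈ S^k) there exists x ∈ S^k such that f(x) = 0. -/
open scoped RealInnerProductSpace

/-!
The argument is Milnor's, in the form given by Rogers. Suppose a tangent field has no zero. After
smooth approximation, projection to the tangent spaces and normalization it may be taken smooth on
the unit sphere of an `n`-dimensional space and of norm one; its homogeneous extension `u` is then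
Lipschitz, smooth away from the origin, with `‖u x‖ = ‖x‖` and `u x ⊥ x`. For small `t` the map
`x ↦ x + t • u x` is a bijection of the space, because `t • u` is a contraction, and it scales
norms by `√(1 + t²)`, so it carries the unit ball onto the ball of radius `√(1 + t²)`, of volume
proportional to `(1 + t²) ^ (n / 2)`. By change of variables this volume is `∫ det (1 + t • Du)`,
a polynomial in `t`. Hence `(1 + t²) ^ n` is up to a constant the square of a polynomial, and since
`X² + 1` is irreducible over `ℝ`, `n` is even.
-/

open MeasureTheory Metric Module NormedSpace Polynomial
open scoped NNReal

section Polynomial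

theorem even_of_associated_sq_prime_pow {M : Type*} [CommMonoidWithZero M] [IsCancelMulZero M]
    {p q : M} {n : ℕ} (hp : Prime p) (h : Associated (q ^ 2) (p ^ n)) : Even n := by
  obtain ⟨i, -, hi⟩ := (dvd_prime_pow hp n).1 ((dvd_pow_self q two_ne_zero).trans h.dvd)
  have hpow : Associated (p ^ (i * 2)) (p ^ n) := pow_mul p i 2 ▸ (hi.symm.pow_pow).trans h
  have hn : i * 2 = n := le_antisymm
    ((pow_dvd_pow_iff hp.ne_zero hp.not_isUnit).1 hpow.dvd)
    ((pow_dvd_pow_iff hp.ne_zero hp.not_isUnit).1 hpow.symm.dvd)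
  exact ⟨i, by rw [← hn, mul_two]⟩

theorem irreducible_X_sq_add_one {K : Type*} [Field K] [LinearOrder K] [IsStrictOrderedRing K] :
    Irreducible (X ^ 2 + 1 : K[X]) := by
  have hdeg : (X ^ 2 + 1 : K[X]).natDegree = 2 := by compute_degree!
  rw [irreducible_iff_roots_eq_zero_of_degree_le_three hdeg.ge (by simp [hdeg]),
    Multiset.eq_zero_iff_forall_notMem]
  intro x hx
  have hroot : x ^ 2 + 1 = 0 := by simpa using isRoot_of_mem_roots hx
  exact (by positivity : x ^ 2 + 1 ≠ 0) hroot

theorem even_of_forall_eval_sq_eq_mul_pow {K : Type*} [Field K] [LinearOrder K]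
    [IsStrictOrderedRing K] {q : K[X]} {c : K} {n : ℕ} {S : Set K} (hc : c ≠ 0)
    (hS : S.Infinite) (h : ∀ t ∈ S, q.eval t ^ 2 = c * (1 + t ^ 2) ^ n) : Even n := by
  have hq : q ^ 2 = C c * (X ^ 2 + 1) ^ n :=
    eq_of_infinite_eval_eq _ _ (hS.mono fun t ht => by simpa [add_comm] using h t ht)
  refine even_of_associated_sq_prime_pow (q := q) irreducible_X_sq_add_one.prime ?_
  rw [hq]
  exact associated_unit_mul_left _ _ (isUnit_C.2 hc.isUnit)

theorem exists_polynomial_eval_eq_integral {α 𝕜 : Type*} [MeasurableSpace α] [RCLike 𝕜]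
    {μ : Measure α} {p : α → 𝕜[X]} {s : Finset 𝕜} (hdeg : ∀ x, (p x).degree < s.card)
    (hint : ∀ t ∈ s, Integrable (fun x => (p x).eval t) μ) :
    ∃ q : 𝕜[X], ∀ t, q.eval t = ∫ x, (p x).eval t ∂μ := by
  refine ⟨Lagrange.interpolate s id fun i => ∫ x, (p x).eval i ∂μ, fun t => ?_⟩
  have hlagrange : ∀ x,
      (p x).eval t = ∑ i ∈ s, (p x).eval i * (Lagrange.basis s id i).eval t := by
    intro x
    conv_lhs => rw [Lagrange.eq_interpolate (v := id) Function.injective_id.injOn (hdeg x)]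
    simp [Lagrange.interpolate_apply, eval_finsetSum]
  simp_rw [hlagrange]
  rw [integral_finsetSum _ fun i hi => (hint i hi).mul_const _]
  simp [Lagrange.interpolate_apply, eval_finsetSum, integral_mul_const]

end Polynomial

section Determinant

theorem eval_reverse_charpoly_neg {R M : Type*} [CommRing R] [AddCommGroup M] [Module R M]
    [Module.Free R M] [Module.Finite R M] (f : Module.End R M) (t : R) :
    (-f).charpoly.reverse.eval t = LinearMap.det (1 + t • f) := by
  let b := Free.chooseBasis R M
  rw [← LinearMap.charpoly_toMatrix (-f) b, Matrix.reverse_charpoly, Matrix.charpolyRev,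
    ← LinearMap.det_toMatrix b, ← coe_evalRingHom, RingHom.map_det]
  congr 1
  ext i j
  rcases eq_or_ne i j with rfl | hij <;> simp [*, mul_comm t]

theorem det_one_add_pos_of_norm_lt_one {E : Type*} [NormedAddCommGroup E] [NormedSpace ℝ E]
    [FiniteDimensional ℝ E] {A : E →L[ℝ] E} (hA : ‖A‖ < 1) : 0 < (1 + A).det := by
  have hcont : Continuous fun s : ℝ => (1 + s • A).det :=
    ContinuousLinearMap.continuous_det.comp (by fun_prop)
  have hne : ∀ s ∈ Set.Icc (0 : ℝ) 1, (1 + s • A).det ≠ 0 := by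
    intro s hs
    have hsA : ‖-(s • A)‖ < 1 := by
      rw [norm_neg, norm_smul, Real.norm_of_nonneg hs.1]
      exact (mul_le_of_le_one_left (norm_nonneg A) hs.2).trans_lt hA
    have hunit : IsUnit (1 + s • A) := by
      simpa only [sub_neg_eq_add] using isUnit_one_sub_of_norm_lt_one hsA
    exact ((hunit.map ContinuousLinearMap.toLinearMapRingHom).map LinearMap.det).ne_zero
  by_contra! hle
  have hdet_zero : (1 + (0 : ℝ) • A).det = 1 := by
    rw [zero_smul, add_zero]; exact LinearMap.det_id
  obtain ⟨s, hs, hs0⟩ := intermediate_value_Icc' zero_le_one hcont.continuousOn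
    (show (0 : ℝ) ∈ Set.Icc _ _ by rw [hdet_zero, one_smul]; exact ⟨hle, zero_le_one⟩)
  exact hne s hs hs0

end Determinant

theorem exists_polynomial_eval_eq_integral_det {α E : Type*} [MeasurableSpace α] {μ : Measure α}
    [NormedAddCommGroup E] [NormedSpace ℝ E] [FiniteDimensional ℝ E] {A : α → E →L[ℝ] E}
    {S : Set ℝ} (hS : S.Infinite) (hint : ∀ t ∈ S, Integrable (fun x => (1 + t • A x).det) μ) :
    ∃ q : ℝ[X], ∀ t, q.eval t = ∫ x, (1 + t • A x).det ∂μ := by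
  let p : α → ℝ[X] := fun x => (-(A x : E →ₗ[ℝ] E)).charpoly.reverse
  have hp : ∀ x t, (p x).eval t = (1 + t • A x).det := fun x t => eval_reverse_charpoly_neg _ t
  obtain ⟨s, hsS, hcard⟩ := hS.exists_subset_card_eq (finrank ℝ E + 1)
  have hdeg : ∀ x, (p x).degree < s.card := fun x => degree_le_natDegree.trans_lt <| by
    rw [hcard, Nat.cast_lt, Nat.lt_succ_iff]
    exact (reverse_natDegree_le _).trans (LinearMap.charpoly_natDegree _).le
  simp only [← hp] at hint ⊢
  exact exists_polynomial_eval_eq_integral hdeg fun t ht => hint t (hsS ht)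

theorem bijective_add_of_lipschitzWith {E : Type*} [NormedAddCommGroup E] [CompleteSpace E]
    {g : E → E} {K : ℝ≥0} (hg : LipschitzWith K g) (hK : K < 1) :
    Function.Bijective fun x => x + g x := by
  refine (Function.bijective_iff_existsUnique _).2 fun y => ?_
  have hcontr : ContractingWith K fun x => y - g x :=
    ⟨hK, by simpa using (LipschitzWith.const y).sub hg⟩
  exact ⟨hcontr.fixedPoint, (eq_sub_iff_add_eq.1 hcontr.fixedPoint_isFixedPt.symm),
    fun x hx => hcontr.fixedPoint_unique (eq_sub_iff_add_eq.2 hx).symm⟩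

section ChangeOfVariables

variable {E : Type*} [NormedAddCommGroup E] [NormedSpace ℝ E] [FiniteDimensional ℝ E]
  [MeasurableSpace E] [BorelSpace E] {μ : Measure E} [μ.IsAddHaarMeasure]
  {f : E → E} {f' : E → E →L[ℝ] E} {s : Set E}

theorem integrableOn_det_fderiv (hs : MeasurableSet s)
    (hf' : ∀ x ∈ s, HasFDerivWithinAt f (f' x) s x) (hf : s.InjOn f)
    (hdet : ∀ x ∈ s, 0 ≤ (f' x).det) (hμ : μ (f '' s) ≠ ⊤) :
    IntegrableOn (fun x => (f' x).det) s μ := by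
  have hint := (integrableOn_image_iff_integrableOn_abs_det_fderiv_smul μ hs hf' hf
    fun _ => (1 : ℝ)).1 (integrableOn_const hμ)
  refine hint.congr_fun (fun x hx => ?_) hs
  simp only [abs_of_nonneg (hdet x hx), smul_eq_mul, mul_one]

theorem setIntegral_det_fderiv (hs : MeasurableSet s)
    (hf' : ∀ x ∈ s, HasFDerivWithinAt f (f' x) s x) (hf : s.InjOn f)
    (hdet : ∀ x ∈ s, 0 ≤ (f' x).det) :
    ∫ x in s, (f' x).det ∂μ = μ.real (f '' s) := by
  calc ∫ x in s, (f' x).det ∂μ = ∫ x in s, |(f' x).det| • (1 : ℝ) ∂μ :=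
        setIntegral_congr_fun hs fun x hx => by
          simp only [abs_of_nonneg (hdet x hx), smul_eq_mul, mul_one]
    _ = ∫ _ in f '' s, (1 : ℝ) ∂μ :=
        (integral_image_eq_integral_abs_det_fderiv_smul μ hs hf' hf fun _ => (1 : ℝ)).symm
    _ = μ.real (f '' s) := by rw [setIntegral_const, smul_eq_mul, mul_one]

end ChangeOfVariables

section OrthogonalField

variable {E : Type*} [NormedAddCommGroup E] [InnerProductSpace ℝ E]

theorem norm_add_smul_of_inner_eq_zero {x y : E} (hinner : ⟪y, x⟫ = 0) (hnorm : ‖y‖ = ‖x‖)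
    (t : ℝ) : ‖x + t • y‖ = √(1 + t ^ 2) * ‖x‖ := by
  have hsq : ‖x + t • y‖ ^ 2 = (√(1 + t ^ 2) * ‖x‖) ^ 2 := by
    rw [norm_add_sq_real, inner_smul_right, real_inner_comm, hinner, norm_smul, hnorm, mul_pow,
      mul_pow, Real.norm_eq_abs, sq_abs, Real.sq_sqrt (by positivity)]
    ring
  exact (pow_left_inj₀ (by positivity) (by positivity) two_ne_zero).1 hsq

variable {u : E → E} {K : ℝ≥0} {t : ℝ}

theorem bijective_add_smul_of_lipschitzWith [CompleteSpace E] (hu : LipschitzWith K u)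
    (ht : ‖t‖₊ * K < 1) : Function.Bijective fun x => x + t • u x :=
  bijective_add_of_lipschitzWith ((lipschitzWith_smul t).comp hu) ht

theorem hasFDerivAt_add_smul {x : E} (hu : DifferentiableAt ℝ u x) (t : ℝ) :
    HasFDerivAt (fun x => x + t • u x) (1 + t • fderiv ℝ u x) x :=
  (hasFDerivAt_id x).add (hu.hasFDerivAt.const_smul t)

theorem image_add_smul_ball_sdiff_zero [CompleteSpace E] (hu : LipschitzWith K u)
    (hnorm : ∀ x, ‖u x‖ = ‖x‖) (hinner : ∀ x, ⟪u x, x⟫ = 0) (ht : ‖t‖₊ * K < 1) :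
    (fun x => x + t • u x) '' (ball 0 1 \ {0}) = ball 0 √(1 + t ^ 2) \ {0} := by
  have hr : 0 < √(1 + t ^ 2) := by positivity
  have hpreimage :
      (fun x => x + t • u x) ⁻¹' (ball 0 √(1 + t ^ 2) \ {0}) = ball 0 1 \ {0} := by
    ext x
    simp only [Set.mem_preimage, Set.mem_sdiff, mem_ball_zero_iff, Set.mem_singleton_iff]
    rw [← norm_eq_zero, norm_add_smul_of_inner_eq_zero (hinner x) (hnorm x),
      mul_lt_iff_lt_one_right hr, mul_eq_zero_iff_left hr.ne', norm_eq_zero]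
  rw [← hpreimage, Set.image_preimage_eq _ (bijective_add_smul_of_lipschitzWith hu ht).surjective]

variable [FiniteDimensional ℝ E]

theorem det_one_add_smul_fderiv_pos (hu : LipschitzWith K u) (ht : ‖t‖₊ * K < 1) (x : E) :
    0 < (1 + t • fderiv ℝ u x).det := by
  refine det_one_add_pos_of_norm_lt_one ?_
  calc ‖t • fderiv ℝ u x‖ = ‖t‖ * ‖fderiv ℝ u x‖ := norm_smul _ _
    _ ≤ ‖t‖ * K := by gcongr; exact norm_fderiv_le_of_lipschitz ℝ hu
    _ < 1 := by exact_mod_cast ht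

section Volume

variable [MeasurableSpace E] [BorelSpace E] (μ : Measure E) [μ.IsAddHaarMeasure]

theorem integrableOn_det_one_add_smul_fderiv (hu : LipschitzWith K u)
    (hnorm : ∀ x, ‖u x‖ = ‖x‖) (hinner : ∀ x, ⟪u x, x⟫ = 0)
    (hdiff : ∀ x ≠ 0, DifferentiableAt ℝ u x) (ht : ‖t‖₊ * K < 1) :
    IntegrableOn (fun x => (1 + t • fderiv ℝ u x).det) (ball 0 1 \ {0}) μ := by
  refine integrableOn_det_fderiv (measurableSet_ball.diff (measurableSet_singleton 0))
    (fun x hx => (hasFDerivAt_add_smul (hdiff x hx.2) t).hasFDerivWithinAt)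
    (bijective_add_smul_of_lipschitzWith hu ht).injective.injOn
    (fun x _ => (det_one_add_smul_fderiv_pos hu ht x).le) ?_
  rw [image_add_smul_ball_sdiff_zero hu hnorm hinner ht]
  exact ((measure_mono Set.sdiff_subset).trans_lt measure_ball_lt_top).ne

theorem setIntegral_det_one_add_smul_fderiv [Nontrivial E] (hu : LipschitzWith K u)
    (hnorm : ∀ x, ‖u x‖ = ‖x‖) (hinner : ∀ x, ⟪u x, x⟫ = 0)
    (hdiff : ∀ x ≠ 0, DifferentiableAt ℝ u x) (ht : ‖t‖₊ * K < 1) :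
    ∫ x in ball 0 1 \ {0}, (1 + t • fderiv ℝ u x).det ∂μ =
      √(1 + t ^ 2) ^ finrank ℝ E * μ.real (ball 0 1) := by
  rw [setIntegral_det_fderiv (measurableSet_ball.diff (measurableSet_singleton 0))
    (fun x hx => (hasFDerivAt_add_smul (hdiff x hx.2) t).hasFDerivWithinAt)
    (bijective_add_smul_of_lipschitzWith hu ht).injective.injOn
    (fun x _ => (det_one_add_smul_fderiv_pos hu ht x).le),
    image_add_smul_ball_sdiff_zero hu hnorm hinner ht,
    measureReal_def, measure_sdiff_null (measure_singleton 0),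
    Measure.addHaar_ball μ 0 (Real.sqrt_nonneg _), ENNReal.toReal_mul,
    ENNReal.toReal_ofReal (by positivity), measureReal_def]

end Volume

theorem even_finrank_of_lipschitzWith_of_inner_eq_zero (hu : LipschitzWith K u)
    (hnorm : ∀ x, ‖u x‖ = ‖x‖) (hinner : ∀ x, ⟪u x, x⟫ = 0)
    (hdiff : ∀ x ≠ 0, DifferentiableAt ℝ u x) : Even (finrank ℝ E) := by
  rcases subsingleton_or_nontrivial E with _ | _
  · simp [finrank_zero_of_subsingleton]
  borelize E
  let μ : Measure E := Measure.addHaar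
  let S : Set ℝ := {t | ‖t‖₊ * K < 1}
  have hS : S.Infinite := infinite_of_mem_nhds 0 <|
    (isOpen_lt (by fun_prop) continuous_const).mem_nhds (by simp)
  obtain ⟨q, hq⟩ := exists_polynomial_eval_eq_integral_det hS fun t ht =>
    integrableOn_det_one_add_smul_fderiv μ hu hnorm hinner hdiff ht
  have hvol : μ.real (ball 0 1) ≠ 0 :=
    (ENNReal.toReal_pos (measure_ball_pos μ 0 one_pos).ne' measure_ball_lt_top.ne).ne'
  refine even_of_forall_eval_sq_eq_mul_pow (q := q) (pow_ne_zero 2 hvol) hS fun t ht => ?_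
  calc q.eval t ^ 2 = (√(1 + t ^ 2) ^ finrank ℝ E * μ.real (ball 0 1)) ^ 2 := by
        rw [hq, setIntegral_det_one_add_smul_fderiv μ hu hnorm hinner hdiff ht]
    _ = μ.real (ball 0 1) ^ 2 * (1 + t ^ 2) ^ finrank ℝ E := by
        rw [mul_pow, pow_right_comm, Real.sq_sqrt (by positivity), mul_comm]

end OrthogonalField

theorem exists_contDiff_dist_lt_of_isClosed {E F : Type*} [NormedAddCommGroup E] [NormedSpace ℝ E]
    [FiniteDimensional ℝ E] [NormedAddCommGroup F] [NormedSpace ℝ F] [FiniteDimensional ℝ F]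
    {f : E → F} {s : Set E} (hs : IsClosed s) (hf : ContinuousOn f s) (n : ℕ∞) {ε : ℝ}
    (hε : 0 < ε) :
    ∃ g : E → F, ContDiff ℝ n g ∧ ∀ x ∈ s, dist (g x) (f x) < ε := by
  have : TietzeExtension F := RCLike.instTietzeExtensionTVS (𝕜 := ℝ)
  obtain ⟨f', hf'⟩ := ContinuousMap.exists_restrict_eq hs ⟨s.domRestrict f, hf.domRestrict⟩
  obtain ⟨g, hg, hdist, -⟩ :=
    f'.continuous.exists_contDiff_approx n continuous_const fun _ => hε
  exact ⟨g, hg, fun x hx => (DFunLike.congr_fun hf' ⟨x, hx⟩ : f' x = f x) ▸ hdist x⟩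

theorem exists_lipschitzOnWith_of_contDiffAt {E F : Type*} [NormedAddCommGroup E]
    [NormedSpace ℝ E] [NormedAddCommGroup F] [NormedSpace ℝ F] {f : E → F} {s : Set E}
    (hs : IsCompact s) (hf : ∀ x ∈ s, ContDiffAt ℝ 1 f x) : ∃ K, LipschitzOnWith K f s := by
  have hloc : LocallyLipschitzOn s f := fun x hx =>
    let ⟨K, t, ht, hK⟩ := (hf x hx).exists_lipschitzOnWith
    ⟨K, t, mem_nhdsWithin_of_mem_nhds ht, hK⟩
  exact hloc.exists_lipschitzOnWith_of_compact hs

section RadialExtension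

variable {E F : Type*} [NormedAddCommGroup E] [NormedSpace ℝ E]
  [NormedAddCommGroup F] [NormedSpace ℝ F]

theorem normalize_mem_sphere {x : E} (hx : x ≠ 0) : normalize x ∈ sphere (0 : E) 1 :=
  mem_sphere_zero_iff_norm.2 (norm_normalize hx)

theorem norm_mul_norm_normalize_sub_le (x y : E) :
    ‖y‖ * ‖normalize x - normalize y‖ ≤ 2 * ‖x - y‖ := by
  have hsplit : ‖y‖ • (normalize x - normalize y) = (‖y‖ - ‖x‖) • normalize x + (x - y) := by
    rw [smul_sub, sub_smul, norm_smul_normalize, norm_smul_normalize]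
    abel
  have hle : ‖normalize x‖ ≤ 1 := by
    rcases eq_or_ne x 0 with rfl | hx
    · simp
    · exact (norm_normalize hx).le
  calc ‖y‖ * ‖normalize x - normalize y‖ = ‖(‖y‖ - ‖x‖) • normalize x + (x - y)‖ := by
        rw [← hsplit, norm_smul, norm_norm]
    _ ≤ ‖(‖y‖ - ‖x‖) • normalize x‖ + ‖x - y‖ := norm_add_le _ _
    _ ≤ |‖y‖ - ‖x‖| + ‖x - y‖ := by
        rw [norm_smul, Real.norm_eq_abs]
        gcongr
        exact mul_le_of_le_one_right (abs_nonneg _) hle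
    _ ≤ ‖x - y‖ + ‖x - y‖ := by
        gcongr
        exact norm_sub_rev x y ▸ abs_norm_sub_norm_le y x
    _ = 2 * ‖x - y‖ := (two_mul _).symm

/-- The extension of the values of `v` on the unit sphere to a positively homogeneous map of
degree one; it vanishes at the origin, whatever the value of `v` there. -/
noncomputable def radialExtension (v : E → F) (x : E) : F := ‖x‖ • v (normalize x)

theorem radialExtension_zero (v : E → F) : radialExtension v 0 = 0 := by
  rw [radialExtension, norm_zero, zero_smul]

variable {v : E → F}

theorem norm_radialExtension (hv : ∀ x ∈ sphere (0 : E) 1, ‖v x‖ = 1) (x : E) :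
    ‖radialExtension v x‖ = ‖x‖ := by
  rcases eq_or_ne x 0 with rfl | hx
  · rw [radialExtension_zero, norm_zero, norm_zero]
  · rw [radialExtension, norm_smul, norm_norm, hv _ (normalize_mem_sphere hx), mul_one]

theorem norm_radialExtension_le {C : ℝ} (hv : ∀ x ∈ sphere (0 : E) 1, ‖v x‖ ≤ C) (x : E) :
    ‖radialExtension v x‖ ≤ C * ‖x‖ := by
  rcases eq_or_ne x 0 with rfl | hx
  · simp [radialExtension_zero]
  · rw [radialExtension, norm_smul, norm_norm, mul_comm]
    gcongr
    exact hv _ (normalize_mem_sphere hx)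

theorem norm_radialExtension_sub_le {C K : ℝ≥0} (hv : ∀ x ∈ sphere (0 : E) 1, ‖v x‖ ≤ C)
    (hK : LipschitzOnWith K v (sphere 0 1)) {x y : E} (hx : x ≠ 0) (hy : y ≠ 0) :
    ‖radialExtension v x - radialExtension v y‖ ≤ (C + 2 * K) * ‖x - y‖ := by
  have hsplit : radialExtension v x - radialExtension v y =
      (‖x‖ - ‖y‖) • v (normalize x) + ‖y‖ • (v (normalize x) - v (normalize y)) := by
    simp only [radialExtension, sub_smul, smul_sub]
    abel
  calc ‖radialExtension v x - radialExtension v y‖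
      ≤ ‖(‖x‖ - ‖y‖) • v (normalize x)‖ + ‖‖y‖ • (v (normalize x) - v (normalize y))‖ :=
        hsplit ▸ norm_add_le _ _
    _ = |‖x‖ - ‖y‖| * ‖v (normalize x)‖ + ‖y‖ * ‖v (normalize x) - v (normalize y)‖ := by
        rw [norm_smul, norm_smul, norm_norm, Real.norm_eq_abs]
    _ ≤ ‖x - y‖ * C + ‖y‖ * (K * ‖normalize x - normalize y‖) := by
        gcongr
        · exact abs_norm_sub_norm_le x y
        · exact hv _ (normalize_mem_sphere hx)
        · exact hK.norm_sub_le (normalize_mem_sphere hx) (normalize_mem_sphere hy)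
    _ = C * ‖x - y‖ + K * (‖y‖ * ‖normalize x - normalize y‖) := by ring
    _ ≤ C * ‖x - y‖ + K * (2 * ‖x - y‖) := by
        gcongr C * ‖x - y‖ + K * ?_
        exact norm_mul_norm_normalize_sub_le x y
    _ = (C + 2 * K) * ‖x - y‖ := by ring

theorem lipschitzWith_radialExtension {C K : ℝ≥0} (hv : ∀ x ∈ sphere (0 : E) 1, ‖v x‖ ≤ C)
    (hK : LipschitzOnWith K v (sphere 0 1)) : LipschitzWith (C + 2 * K) (radialExtension v) := by
  have hzero (x : E) : ‖radialExtension v x‖ ≤ (C + 2 * K) * ‖x‖ :=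
    (norm_radialExtension_le hv x).trans (by gcongr; exact le_add_of_nonneg_right (by positivity))
  refine LipschitzWith.of_dist_le_mul fun x y => ?_
  rw [dist_eq_norm, dist_eq_norm]
  push_cast
  rcases eq_or_ne x 0 with rfl | hx
  · simpa only [radialExtension_zero, zero_sub, norm_neg] using hzero y
  rcases eq_or_ne y 0 with rfl | hy
  · simpa only [radialExtension_zero, sub_zero] using hzero x
  exact norm_radialExtension_sub_le hv hK hx hy

end RadialExtension

section TangentField

variable {E : Type*} [NormedAddCommGroup E] [InnerProductSpace ℝ E]

theorem inner_radialExtension_self {v : E → E} (hv : ∀ x ∈ sphere (0 : E) 1, ⟪v x, x⟫ = 0)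
    (x : E) : ⟪radialExtension v x, x⟫ = 0 := by
  rcases eq_or_ne x 0 with rfl | hx
  · exact inner_zero_right _
  · calc ⟪radialExtension v x, x⟫ = ⟪‖x‖ • v (normalize x), ‖x‖ • normalize x⟫ := by
          rw [radialExtension, norm_smul_normalize]
      _ = 0 := by
          rw [inner_smul_left, inner_smul_right, hv _ (normalize_mem_sphere hx), mul_zero,
            mul_zero]

theorem contDiffAt_normalize {n : WithTop ℕ∞} {x : E} (hx : x ≠ 0) :
    ContDiffAt ℝ n (NormedSpace.normalize : E → E) x :=
  ((contDiffAt_norm ℝ hx).inv (norm_ne_zero_iff.2 hx)).smul contDiffAt_id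

theorem differentiableAt_radialExtension {F : Type*} [NormedAddCommGroup F] [NormedSpace ℝ F]
    {v : E → F} (hv : ∀ x ∈ sphere (0 : E) 1, DifferentiableAt ℝ v x) {x : E} (hx : x ≠ 0) :
    DifferentiableAt ℝ (radialExtension v) x :=
  (differentiableAt_id.norm ℝ hx).smul <|
    (hv _ (normalize_mem_sphere hx)).comp x
      ((contDiffAt_normalize (n := 1) hx).differentiableAt one_ne_zero)

theorem inner_pos_of_norm_sub_lt {y z : E} (h : ‖z - y‖ < ‖y‖) : 0 < ⟪z, y⟫ := by
  have hsq : ‖z - y‖ ^ 2 < ‖y‖ ^ 2 := by gcongr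
  rw [norm_sub_sq_real] at hsq
  linarith [sq_nonneg ‖z‖]

theorem inner_sub_inner_smul_self {x : E} (hx : ‖x‖ = 1) (z : E) :
    ⟪z - ⟪z, x⟫ • x, x⟫ = 0 := by
  rw [inner_sub_left, real_inner_smul_left, real_inner_self_eq_norm_sq, hx, one_pow, mul_one,
    sub_self]

theorem sub_inner_smul_ne_zero {x y z : E} (hxy : ⟪y, x⟫ = 0) (h : ‖z - y‖ < ‖y‖) :
    z - ⟪z, x⟫ • x ≠ 0 := by
  intro hzero
  refine (inner_pos_of_norm_sub_lt h).ne' ?_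
  rw [sub_eq_zero.1 hzero, real_inner_smul_left, real_inner_comm y x, hxy, mul_zero]

variable [FiniteDimensional ℝ E]

theorem exists_contDiff_tangent_field_ne_zero {f : E → E} (hcont : ContinuousOn f (sphere 0 1))
    (htangent : ∀ x ∈ sphere (0 : E) 1, ⟪f x, x⟫ = 0) (hne : ∀ x ∈ sphere (0 : E) 1, f x ≠ 0)
    (n : ℕ∞) :
    ∃ w : E → E, ContDiff ℝ n w ∧
      ∀ x ∈ sphere (0 : E) 1, ⟪w x, x⟫ = 0 ∧ w x ≠ 0 := by
  obtain ⟨ε, hε, hεf⟩ := (isCompact_sphere (0 : E) 1).exists_forall_le' hcont.norm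
    fun x hx => norm_pos_iff.2 (hne x hx)
  obtain ⟨g, hg, hgf⟩ := exists_contDiff_dist_lt_of_isClosed isClosed_sphere hcont n hε
  refine ⟨fun x => g x - ⟪g x, x⟫ • x, hg.sub ((hg.inner ℝ contDiff_id).smul contDiff_id),
    fun x hx => ⟨inner_sub_inner_smul_self (mem_sphere_zero_iff_norm.1 hx) _,
      sub_inner_smul_ne_zero (htangent x hx) ?_⟩⟩
  exact dist_eq_norm (g x) (f x) ▸ (hgf x hx).trans_le (hεf x hx)

theorem exists_contDiffAt_unit_tangent_field {f : E → E} (hcont : ContinuousOn f (sphere 0 1))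
    (htangent : ∀ x ∈ sphere (0 : E) 1, ⟪f x, x⟫ = 0) (hne : ∀ x ∈ sphere (0 : E) 1, f x ≠ 0)
    (n : ℕ∞) :
    ∃ v : E → E, ∀ x ∈ sphere (0 : E) 1, ContDiffAt ℝ n v x ∧ ‖v x‖ = 1 ∧ ⟪v x, x⟫ = 0 := by
  obtain ⟨w, hw, hwsphere⟩ := exists_contDiff_tangent_field_ne_zero hcont htangent hne n
  refine ⟨fun x => normalize (w x), fun x hx => ?_⟩
  obtain ⟨hwx, hw0⟩ := hwsphere x hx
  refine ⟨(contDiffAt_normalize hw0).comp x hw.contDiffAt, norm_normalize hw0, ?_⟩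
  simp only [NormedSpace.normalize, real_inner_smul_left, hwx, mul_zero]

theorem hairy_ball_theorem_general (hodd : Odd (finrank ℝ E)) {f : E → E}
    (hcont : ContinuousOn f (sphere 0 1)) (htangent : ∀ x ∈ sphere (0 : E) 1, ⟪f x, x⟫ = 0) :
    ∃ x ∈ sphere (0 : E) 1, f x = 0 := by
  by_contra! hne
  obtain ⟨v, hv⟩ := exists_contDiffAt_unit_tangent_field hcont htangent hne 1
  choose hsmooth hunit horth using hv
  obtain ⟨K, hK⟩ := exists_lipschitzOnWith_of_contDiffAt (isCompact_sphere 0 1) hsmooth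
  have heven : Even (finrank ℝ E) :=
    even_finrank_of_lipschitzWith_of_inner_eq_zero
      (lipschitzWith_radialExtension (C := 1) (fun x hx => (hunit x hx).le) hK)
      (norm_radialExtension hunit) (inner_radialExtension_self horth)
      fun x => differentiableAt_radialExtension fun y hy =>
        (hsmooth y hy).differentiableAt one_ne_zero
  exact Nat.not_even_iff_odd.2 hodd heven

end TangentField

/-- **Hairy Ball Theorem (Poincaré–Brouwer).** If `k ≥ 2` is even, every continuous
tangent vector field on the unit sphere `S^k ⊆ ℝ^{k+1}` has a zero. -/
theorem hairy_ball_theorem (k : ℕ) (hk : 2 ≤ k) (hkeven : Even k)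
    (f : EuclideanSpace ℝ (Fin (k + 1)) → EuclideanSpace ℝ (Fin (k + 1)))
    (hcont : ContinuousOn f (Metric.sphere (0 : EuclideanSpace ℝ (Fin (k + 1))) 1))
    (htangent : ∀ x ∈ Metric.sphere (0 : EuclideanSpace ℝ (Fin (k + 1))) 1,
      ⟪f x, x⟫ = 0) :
    ∃ x ∈ Metric.sphere (0 : EuclideanSpace ℝ (Fin (k + 1))) 1, f x = 0 :=
  hairy_ball_theorem_general (by rw [finrank_euclideanSpace_fin]; exact hkeven.add_one)
    hcont htangent
end

section
/- For every k ≥ 1, the inverse stereographic projection SP⁻¹ : ℝ^k → ℝ^{k+1} is Lipschitz-continuous with Lipschitz constant 4√k when both ℝ^k and ℝ^{k+1} are equipped with the ℓ∞-norm: for all z, z' ∈ ℝ^k, ‖SP⁻¹(z) − SP⁻¹(z')‖∞ ≤ 4√k · ‖z − z'‖∞. -/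
/-!
Place `ℝ^k` in `ℝ^{k+1}` as the hyperplane `x₀ = 0`. Then `SP⁻¹` is the restriction to this
hyperplane of the inversion of `ℝ^{k+1}` with centre `p` and radius `√2`. An inversion of radius `R`
multiplies the Euclidean distance of `x` and `y` by `R² / (|x - p| |y - p|)`, and the hyperplane
stays at distance at least `1` from `p`, so `SP⁻¹` is `2`-Lipschitz for the Euclidean norms. Passing
from the Euclidean norms to the sup norms costs a factor `√k` in the domain and nothing in the
codomain.
-/

open Finset

noncomputable section

/-- The inverse stereographic projection
`SP⁻¹(z) = p + (2 / (1 + Σ zᵢ²)) · (−1, z₁, …, z_k)`. -/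
def SPinv {k : ℕ} (z : Fin k → ℝ) : Fin (k + 1) → ℝ :=
  Fin.cons (1 - 2 / (1 + ∑ j, z j ^ 2))
    (fun i => (2 / (1 + ∑ j, z j ^ 2)) * z i)

open EuclideanGeometry WithLp
open scoped NNReal

lemma lipschitzOnWith_inversion {V P : Type*} [NormedAddCommGroup V] [InnerProductSpace ℝ V]
    [MetricSpace P] [NormedAddTorsor V P] (c : P) (R : ℝ≥0) {r : ℝ≥0} (hr : 0 < r) :
    LipschitzOnWith ((R / r) ^ 2) (inversion c R) (Metric.ball c r)ᶜ := by
  refine LipschitzOnWith.of_dist_le_mul fun x hx y hy => ?_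
  have hxr : (r : ℝ) ≤ dist x c := not_lt.mp hx
  have hyr : (r : ℝ) ≤ dist y c := not_lt.mp hy
  have hr' : (0 : ℝ) < r := hr
  calc dist (inversion c R x) (inversion c R y)
      = R ^ 2 / (dist x c * dist y c) * dist x y :=
        dist_inversion_inversion (dist_pos.mp (hr'.trans_le hxr)) (dist_pos.mp (hr'.trans_le hyr)) R
    _ ≤ R ^ 2 / (r * r) * dist x y := by gcongr
    _ = ((R / r) ^ 2 : ℝ≥0) * dist x y := by push_cast; ring

section Euclidean

variable {k : ℕ}

/-- The pole `p = (1, 0, …, 0)` from which `S^k` is projected. -/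
def pole (k : ℕ) : EuclideanSpace ℝ (Fin (k + 1)) := toLp 2 (Fin.cons 1 0)

/-- The embedding `z ↦ (0, z)` of `ℝ^k` onto the hyperplane `x₀ = 0` of `ℝ^{k+1}`, both with the
Euclidean norm. -/
def equatorialEmbedding (z : EuclideanSpace ℝ (Fin k)) : EuclideanSpace ℝ (Fin (k + 1)) :=
  toLp 2 (Fin.cons 0 z)

lemma isometry_equatorialEmbedding : Isometry (equatorialEmbedding (k := k)) :=
  Isometry.of_dist_eq fun z z' => by
    simp [equatorialEmbedding, EuclideanSpace.dist_eq, Fin.sum_univ_succ]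

lemma dist_equatorialEmbedding_pole_sq (z : EuclideanSpace ℝ (Fin k)) :
    dist (equatorialEmbedding z) (pole k) ^ 2 = 1 + ∑ j, z j ^ 2 := by
  simp [equatorialEmbedding, pole, EuclideanSpace.dist_sq_eq, Fin.sum_univ_succ]

lemma one_le_dist_equatorialEmbedding_pole (z : EuclideanSpace ℝ (Fin k)) :
    1 ≤ dist (equatorialEmbedding z) (pole k) := by
  rw [← one_le_sq_iff₀ dist_nonneg, dist_equatorialEmbedding_pole_sq]
  exact le_add_of_nonneg_right (sum_nonneg fun j _ => sq_nonneg (z j))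

lemma toLp_SPinv_eq_inversion (z : EuclideanSpace ℝ (Fin k)) :
    toLp 2 (SPinv z) = inversion (pole k) √2 (equatorialEmbedding z) := by
  have hscale : (√2 / dist (equatorialEmbedding z) (pole k)) ^ 2 = 2 / (1 + ∑ j, z j ^ 2) := by
    rw [div_pow, Real.sq_sqrt zero_le_two, dist_equatorialEmbedding_pole_sq]
  rw [inversion, hscale]
  ext i
  cases i using Fin.cases with
  | zero => simp [SPinv, equatorialEmbedding, pole, sub_eq_neg_add]
  | succ i => simp [SPinv, equatorialEmbedding, pole]

lemma lipschitzWith_toLp_SPinv :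
    LipschitzWith 2 fun z : EuclideanSpace ℝ (Fin k) => toLp 2 (SPinv z) := by
  have hinv : LipschitzOnWith 2 (inversion (pole k) √2) (Metric.ball (pole k) 1)ᶜ := by
    simpa using lipschitzOnWith_inversion (pole k) (NNReal.sqrt 2) one_pos
  have hfar : Set.MapsTo equatorialEmbedding Set.univ (Metric.ball (pole k) 1)ᶜ := fun z _ => by
    simpa using one_le_dist_equatorialEmbedding_pole z
  simpa [Function.comp_def, toLp_SPinv_eq_inversion] using
    hinv.comp isometry_equatorialEmbedding.lipschitz.lipschitzOnWith hfar

end Euclidean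

theorem spinv_lipschitz_general (k : ℕ) :
    LipschitzWith (2 * NNReal.sqrt k) (SPinv (k := k)) := by
  have hdomain : LipschitzWith (NNReal.sqrt k) (toLp 2 (V := Fin k → ℝ)) := by
    simpa [NNReal.sqrt_eq_rpow] using PiLp.lipschitzWith_toLp 2 fun _ : Fin k => ℝ
  have hcodomain := PiLp.lipschitzWith_ofLp 2 fun _ : Fin (k + 1) => ℝ
  simpa [Function.comp_def] using hcodomain.comp (lipschitzWith_toLp_SPinv.comp hdomain)

/-- The inverse stereographic projection is `4√k`-Lipschitz when both `ℝ^k` and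
`ℝ^{k+1}` carry the ℓ∞-norm (which is the default norm on `Fin n → ℝ`). -/
theorem spinv_lipschitz (k : ℕ) (hk : 1 ≤ k) (z z' : Fin k → ℝ) :
    ‖SPinv z - SPinv z'‖ ≤ 4 * Real.sqrt k * ‖z - z'‖ := by
  calc ‖SPinv z - SPinv z'‖
      ≤ 2 * Real.sqrt k * ‖z - z'‖ := by
        simpa using (spinv_lipschitz_general k).norm_sub_le z z'
    _ ≤ 4 * Real.sqrt k * ‖z - z'‖ := by gcongr; norm_num

end
end

section
/- For every k ≥ 1 and every x ∈ S^k with x_0 < 1, the vectors b_1(x), ..., b_k(x) are tangent to S^k at x and orthonormal: ⟨b_i(x), x⟩ = 0 for all i ∈ {1,...,k}, and ⟨b_i(x), b_j(x)⟩ = 1 if i = j and 0 if i ≠ j, for all i, j ∈ {1,...,k}. -/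
open Finset

noncomputable section

/-- The ℓ₂-norm on `ℝⁿ`. -/
def l2 {n : ℕ} (x : Fin n → ℝ) : ℝ := Real.sqrt (∑ i, x i ^ 2)

/-- The standard inner product on `ℝⁿ`. -/
def dotp {n : ℕ} (x y : Fin n → ℝ) : ℝ := ∑ i, x i * y i

/-- The unit sphere `S^k` in `ℝ^{k+1}`. -/
def unitSphere (k : ℕ) : Set (Fin (k + 1) → ℝ) := {x | l2 x = 1}

/-- The tangent vector `b_i(x)` (for `i ∈ {1, …, k}`, encoded as `i : Fin k`
pointing at coordinate `i.succ`): `[b_i(x)]₀ = x_i`,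
`[b_i(x)]_i = 1 − x_i² / (1 − x₀)`, and `[b_i(x)]_j = −x_j x_i / (1 − x₀)` otherwise. -/
def tb {k : ℕ} (x : Fin (k + 1) → ℝ) (i : Fin k) : Fin (k + 1) → ℝ := fun j =>
  if j = 0 then x i.succ
  else if j = i.succ then 1 - (x i.succ) ^ 2 / (1 - x 0)
  else -(x j) * x i.succ / (1 - x 0)

/-!
The vector `b_i(x)` is the image of `e_i` under the reflection that exchanges `e_0` and `x`. Since
reflections are isometries, `b_1(x), …, b_k(x)` are orthonormal and orthogonal to `x` because
`e_1, …, e_k` are orthonormal and orthogonal to `e_0`.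
-/

section Reflection

open scoped InnerProductSpace

theorem reflection_orthogonal_sub_apply {E : Type*} [NormedAddCommGroup E]
    [InnerProductSpace ℝ E] {u v : E} (hu : ‖u‖ = 1) (hv : ‖v‖ = 1) (w : E) :
    (ℝ ∙ (u - v))ᗮ.reflection w = w - (⟪u - v, w⟫_ℝ / (1 - ⟪u, v⟫_ℝ)) • (u - v) := by
  have norm_sq : ‖u - v‖ ^ 2 = (1 - ⟪u, v⟫_ℝ) * 2 := by
    rw [norm_sub_sq_real, hu, hv]
    ring
  rw [Submodule.reflection_orthogonal_apply, Submodule.reflection_singleton_apply,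
    RCLike.ofReal_real_eq_id, id_eq, norm_sq, neg_sub, two_smul, ← add_smul, ← div_div,
    add_halves]

end Reflection

section Euclidean

variable {n : ℕ} (x y : Fin n → ℝ)

theorem inner_toLp_eq_dotp : inner ℝ (WithLp.toLp 2 x) (WithLp.toLp 2 y) = dotp x y := by
  simp [dotp, PiLp.inner_apply, mul_comm]

theorem norm_toLp_eq_l2 : ‖WithLp.toLp 2 x‖ = l2 x := by
  simp [l2, EuclideanSpace.norm_eq]

end Euclidean

section Sphere

open EuclideanSpace (single)

variable {k : ℕ}

theorem norm_toLp_of_mem_unitSphere {x : Fin (k + 1) → ℝ} (hx : x ∈ unitSphere k) :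
    ‖WithLp.toLp 2 x‖ = 1 :=
  (norm_toLp_eq_l2 x).trans hx

theorem tb_succ (x : Fin (k + 1) → ℝ) (i m : Fin k) :
    tb x i m.succ = (if m = i then 1 else 0) - x i.succ / (1 - x 0) * x m.succ := by
  obtain rfl | hm := eq_or_ne m i
  · simp only [tb, Fin.succ_ne_zero, if_true, if_false]
    ring
  · simp only [tb, Fin.succ_ne_zero, Fin.succ_inj, hm, if_false]
    ring

theorem toLp_tb {x : Fin (k + 1) → ℝ} (hx0 : x 0 ≠ 1) (i : Fin k) :
    WithLp.toLp 2 (tb x i) =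
      single i.succ 1 + (x i.succ / (1 - x 0)) • (single 0 1 - WithLp.toLp 2 x) := by
  ext j
  cases j using Fin.cases with
  | zero => simp [tb, div_mul_cancel₀ _ (sub_ne_zero.mpr hx0.symm)]
  | succ m => simp [tb_succ, sub_eq_add_neg]

/-- The Householder reflection of `ℝ^{k+1}` in the hyperplane orthogonal to `e_0 - x`. For `x` on
the unit sphere it exchanges the pole `e_0` and `x`. -/
def poleReflection (x : Fin (k + 1) → ℝ) :
    EuclideanSpace ℝ (Fin (k + 1)) ≃ₗᵢ[ℝ] EuclideanSpace ℝ (Fin (k + 1)) :=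
  (ℝ ∙ (single 0 1 - WithLp.toLp 2 x))ᗮ.reflection

theorem inner_poleReflection_single (x : Fin (k + 1) → ℝ) (i j : Fin (k + 1)) :
    inner ℝ (poleReflection x (single i 1)) (poleReflection x (single j 1)) =
      if i = j then 1 else 0 := by
  rw [LinearIsometryEquiv.inner_map_map]
  exact orthonormal_iff_ite.mp EuclideanSpace.orthonormal_single i j

variable {x : Fin (k + 1) → ℝ}

theorem poleReflection_single_zero (hx : x ∈ unitSphere k) :
    poleReflection x (single 0 1) = WithLp.toLp 2 x :=
  Submodule.reflection_sub (by simp [norm_toLp_of_mem_unitSphere hx])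

theorem poleReflection_single_succ (hx : x ∈ unitSphere k) (hx0 : x 0 ≠ 1) (i : Fin k) :
    poleReflection x (single i.succ 1) = WithLp.toLp 2 (tb x i) := by
  have inner_pole : inner ℝ (single 0 1) (WithLp.toLp 2 x) = x 0 := by
    simp [EuclideanSpace.inner_single_left]
  have inner_normal :
      inner ℝ (single 0 1 - WithLp.toLp 2 x) (single i.succ 1) = -x i.succ := by
    simp [EuclideanSpace.inner_single_right]
  rw [poleReflection,
    reflection_orthogonal_sub_apply (by simp) (norm_toLp_of_mem_unitSphere hx),
    inner_pole, inner_normal, toLp_tb hx0, neg_div, neg_smul, sub_neg_eq_add]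

end Sphere

/-- For `x ∈ S^k` with `x₀ < 1`, the vectors `b_1(x), …, b_k(x)` are tangent to the
sphere at `x` and orthonormal. -/
theorem tangent_basis_orthonormal (k : ℕ) (hk : 1 ≤ k)
    (x : Fin (k + 1) → ℝ) (hx : x ∈ unitSphere k) (hx0 : x 0 < 1) :
    (∀ i : Fin k, dotp (tb x i) x = 0) ∧
    (∀ i j : Fin k, dotp (tb x i) (tb x j) = if i = j then 1 else 0) := by
  constructor
  · intro i
    rw [← inner_toLp_eq_dotp, ← poleReflection_single_succ hx hx0.ne,
      ← poleReflection_single_zero hx, inner_poleReflection_single, if_neg i.succ_ne_zero]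
  · intro i j
    simp only [← inner_toLp_eq_dotp, ← poleReflection_single_succ hx hx0.ne,
      inner_poleReflection_single, Fin.succ_inj]

end
end

section
/- Let k ≥ 1, let ∅ ≠ I ⊆ {1,...,k}, and let z ∈ S^{k-1} be such that z_i ≥ 0 for i ∈ I and z_j = 0 for j ∉ I. Then: (a) w_j(z) = 1/√k for every j ∉ I; (b) there exists i ∈ I with w_i(z) ≤ −1/√k; and (c) for every u ∈ ℝ^k with ‖u − w(z)‖∞ < 1/(2√k), every index m attaining min_{ℓ ∈ {1,...,k}} u_ℓ belongs to I. -/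
open Finset

noncomputable section

/-- The ideal colouring direction `w : S^{k-1} → ℝ^k`,
`wᵢ(z) = (1 − 2 zᵢ Σⱼ zⱼ) / √k`. -/
def wmap {k : ℕ} (z : Fin k → ℝ) : Fin k → ℝ :=
  fun i => (1 - 2 * z i * ∑ j, z j) / Real.sqrt k

/-! If `zᵢ` is the largest coordinate of a nonnegative vector `z`, then `zᵢ ∑ⱼ zⱼ ≥ ∑ⱼ zⱼ²`. For a
unit vector this puts `wᵢ(z)` at or below `-1/√k`, whereas `wⱼ(z) = 1/√k` wherever `zⱼ = 0`. This
gap of `2/√k` survives every perturbation of sup norm less than `1/√k`. -/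

lemma exists_mem_sum_sq_le_mul_sum {ι R : Type*} [Semiring R] [LinearOrder R] [IsOrderedRing R]
    {s : Finset ι} (hs : s.Nonempty) {f : ι → R} (hf : ∀ i ∈ s, 0 ≤ f i) :
    ∃ i ∈ s, ∑ j ∈ s, f j ^ 2 ≤ f i * ∑ j ∈ s, f j := by
  obtain ⟨i, hi, hmax⟩ := s.exists_max_image f hs
  refine ⟨i, hi, ?_⟩
  rw [mul_sum]
  gcongr with j hj
  rw [sq]
  exact mul_le_mul_of_nonneg_right (hmax j hj) (hf j hj)

lemma apply_lt_apply_of_two_mul_norm_sub_lt {ι : Type*} [Fintype ι] {u v : ι → ℝ} {i j : ι}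
    (h : 2 * ‖u - v‖ < v j - v i) : u i < u j := by
  have hi : u i - v i ≤ ‖u - v‖ := (le_abs_self _).trans (norm_le_pi_norm (u - v) i)
  have hj : -‖u - v‖ ≤ u j - v j := neg_le_of_abs_le (norm_le_pi_norm (u - v) j)
  linarith

section wmap

variable {k : ℕ} {z : Fin k → ℝ}

lemma wmap_apply_of_eq_zero {j : Fin k} (hj : z j = 0) : wmap z j = 1 / √k := by
  simp [wmap, hj]

lemma wmap_apply_le_neg_iff {i : Fin k} :
    wmap z i ≤ -(1 / √k) ↔ 1 ≤ z i * ∑ j, z j := by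
  have hk : 0 < √(k : ℝ) := Real.sqrt_pos.2 (Nat.cast_pos.2 i.pos)
  rw [wmap, ← neg_div, div_le_div_iff_of_pos_right hk]
  constructor <;> intro h <;> linarith

lemma exists_mem_wmap_apply_le_neg {I : Finset (Fin k)} (hz : 1 ≤ l2 z)
    (hpos : ∀ i ∈ I, 0 ≤ z i) (hzero : ∀ j ∉ I, z j = 0) :
    ∃ i ∈ I, wmap z i ≤ -(1 / √k) := by
  have hsum : ∑ j ∈ I, z j = ∑ j, z j :=
    sum_subset (subset_univ I) fun j _ hj => hzero j hj
  have hsq : 1 ≤ ∑ j ∈ I, z j ^ 2 := by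
    rw [sum_subset (subset_univ I) fun j _ hj => by simp [hzero j hj]]
    exact Real.one_le_sqrt.1 hz
  have hI : I.Nonempty := nonempty_of_sum_ne_zero (zero_lt_one.trans_le hsq).ne'
  obtain ⟨i, hi, hmul⟩ := exists_mem_sum_sq_le_mul_sum hI hpos
  exact ⟨i, hi, wmap_apply_le_neg_iff.2 (hsum ▸ hsq.trans hmul)⟩

theorem wmap_face_properties_general {I : Finset (Fin k)} (hz : 1 ≤ l2 z)
    (hpos : ∀ i ∈ I, 0 ≤ z i) (hzero : ∀ j ∉ I, z j = 0) :
    (∀ j ∉ I, wmap z j = 1 / √k) ∧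
    (∃ i ∈ I, wmap z i ≤ -(1 / √k)) ∧
    (∀ u : Fin k → ℝ, ‖u - wmap z‖ < 1 / √k →
      ∀ m : Fin k, (∀ ℓ : Fin k, u m ≤ u ℓ) → m ∈ I) := by
  have hout : ∀ j ∉ I, wmap z j = 1 / √k := fun j hj => wmap_apply_of_eq_zero (hzero j hj)
  obtain ⟨i, hi, hwi⟩ := exists_mem_wmap_apply_le_neg hz hpos hzero
  refine ⟨hout, ⟨i, hi, hwi⟩, fun u hu m hmin => ?_⟩
  by_contra hm
  have hgap : 2 * ‖u - wmap z‖ < wmap z m - wmap z i := by linarith [hout m hm]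
  exact (hmin i).not_gt (apply_lt_apply_of_two_mul_norm_sub_lt hgap)

end wmap

/-- For a nonempty `I ⊆ {1, …, k}` and `z ∈ S^{k-1}` supported on `I` with
nonnegative coordinates: (a) `wⱼ(z) = 1/√k` for `j ∉ I`; (b) some `i ∈ I` has
`wᵢ(z) ≤ −1/√k`; (c) any `u` with `‖u − w(z)‖∞ < 1/(2√k)` attains its minimum
coordinate only at indices in `I`. -/
theorem wmap_face_properties (k : ℕ) (hk : 1 ≤ k)
    (I : Finset (Fin k)) (hI : I.Nonempty)
    (z : Fin k → ℝ) (hz : l2 z = 1)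
    (hpos : ∀ i ∈ I, 0 ≤ z i) (hzero : ∀ j ∉ I, z j = 0) :
    (∀ j ∉ I, wmap z j = 1 / Real.sqrt k) ∧
    (∃ i ∈ I, wmap z i ≤ -(1 / Real.sqrt k)) ∧
    (∀ u : Fin k → ℝ, ‖u - wmap z‖ < 1 / (2 * Real.sqrt k) →
      ∀ m : Fin k, (∀ ℓ : Fin k, u m ≤ u ℓ) → m ∈ I) := by
  obtain ⟨hout, hin, hmin⟩ := wmap_face_properties_general hz.ge hpos hzero
  have hradius : 1 / (2 * √(k : ℝ)) ≤ 1 / √k :=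
    one_div_le_one_div_of_le (by positivity) (by linarith [Real.sqrt_nonneg (k : ℝ)])
  exact ⟨hout, hin, fun u hu => hmin u (hu.trans_le hradius)⟩

end
end

section
/- For every k ≥ 1 and every i ∈ {1,...,k}, the map ℝ^k → ℝ^{k+1}, z ↦ b_i(SP⁻¹(z)) is Lipschitz-continuous with Lipschitz constant 20√k when both ℝ^k and ℝ^{k+1} are equipped with the ℓ∞-norm. -/
open Finset

noncomputable section

/-!
Put `v = (-1, z₁, …, z_k)`. Since `‖v‖² = 1 + Σ zᵢ²`, the vector `bᵢ(SP⁻¹(z))` is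
`eᵢ - (2 zᵢ / ‖v‖²) • v`, the image of the unit vector `eᵢ` under the reflection in `vᗮ`.
The projection onto a line depends on a spanning vector `v` in a Lipschitz way away from zero:
if `P` and `Q` are the projections onto `𝕜 ∙ v` and `𝕜 ∙ w`, then
`P - Q = P (1 - Q) - (1 - P) Q`, and both terms are small, because `P` nearly annihilates `wᗮ`
and nearly fixes `w`. As `‖v‖ ≥ 1`, this makes the field `4`-Lipschitz in the Euclidean norms,
and comparing these with the sup norms costs the factor `√k`.
-/

section LineProjection

variable {𝕜 E : Type*} [RCLike 𝕜] [NormedAddCommGroup E] [InnerProductSpace 𝕜 E]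

lemma norm_sub_starProjection_le (K : Submodule 𝕜 E) [K.HasOrthogonalProjection] (x : E) {y : E}
    (hy : y ∈ K) : ‖x - K.starProjection x‖ ≤ ‖x - y‖ := by
  rw [Submodule.starProjection_minimal]
  exact ciInf_le ⟨0, by rintro _ ⟨u, rfl⟩; exact norm_nonneg _⟩ (⟨y, hy⟩ : K)

lemma norm_starProjection_span_singleton (v x : E) :
    ‖(𝕜 ∙ v).starProjection x‖ = ‖inner 𝕜 v x‖ / ‖v‖ := by
  rcases eq_or_ne v 0 with rfl | hv
  · simp
  · have := norm_ne_zero_iff.2 hv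
    rw [Submodule.starProjection_singleton, norm_smul, norm_div, RCLike.norm_ofReal,
      abs_of_nonneg (sq_nonneg ‖v‖)]
    field_simp

lemma norm_starProjection_span_singleton_le_of_inner_eq_zero (v : E) {w x : E}
    (hwx : inner 𝕜 w x = 0) : ‖(𝕜 ∙ v).starProjection x‖ ≤ ‖v - w‖ / ‖v‖ * ‖x‖ := by
  have h_inner : inner 𝕜 v x = inner 𝕜 (v - w) x := by rw [inner_sub_left, hwx, sub_zero]
  rw [norm_starProjection_span_singleton, h_inner, div_mul_eq_mul_div]
  gcongr
  exact norm_inner_le_norm (v - w) x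

lemma norm_sub_starProjection_span_singleton_le_of_mem (v : E) {w x : E} (hx : x ∈ 𝕜 ∙ w) :
    ‖x - (𝕜 ∙ v).starProjection x‖ ≤ ‖v - w‖ / ‖w‖ * ‖x‖ := by
  obtain ⟨c, rfl⟩ := Submodule.mem_span_singleton.1 hx
  rcases eq_or_ne w 0 with rfl | hw
  · simp
  · calc ‖c • w - (𝕜 ∙ v).starProjection (c • w)‖
        ≤ ‖c • w - c • v‖ :=
          norm_sub_starProjection_le _ _
            (Submodule.smul_mem _ c (Submodule.mem_span_singleton_self v))
      _ = ‖c‖ * ‖v - w‖ := by rw [← smul_sub, norm_smul, norm_sub_rev]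
      _ = ‖v - w‖ / ‖w‖ * ‖c • w‖ := by
          have := norm_ne_zero_iff.2 hw
          rw [norm_smul]
          field_simp

lemma norm_starProjection_span_singleton_sub_le (v w x : E) :
    ‖(𝕜 ∙ v).starProjection x - (𝕜 ∙ w).starProjection x‖
      ≤ (‖v - w‖ / ‖v‖ + ‖v - w‖ / ‖w‖) * ‖x‖ := by
  set P := (𝕜 ∙ v).starProjection
  set Q := (𝕜 ∙ w).starProjection
  have h_orthogonal : inner 𝕜 w (x - Q x) = 0 :=
    Submodule.sub_starProjection_mem_orthogonal x w (Submodule.mem_span_singleton_self w)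
  have h_complement : ‖x - Q x‖ ≤ ‖x‖ := by
    simpa only [sub_zero] using norm_sub_starProjection_le (𝕜 ∙ w) x (zero_mem _)
  calc ‖P x - Q x‖
      = ‖P (x - Q x) - (Q x - P (Q x))‖ := by rw [map_sub]; congr 1; abel
    _ ≤ ‖P (x - Q x)‖ + ‖Q x - P (Q x)‖ := norm_sub_le _ _
    _ ≤ ‖v - w‖ / ‖v‖ * ‖x - Q x‖ + ‖v - w‖ / ‖w‖ * ‖Q x‖ :=
        add_le_add (norm_starProjection_span_singleton_le_of_inner_eq_zero v h_orthogonal)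
          (norm_sub_starProjection_span_singleton_le_of_mem v
            (Submodule.starProjection_apply_mem _ x))
    _ ≤ ‖v - w‖ / ‖v‖ * ‖x‖ + ‖v - w‖ / ‖w‖ * ‖x‖ := by
        gcongr
        exact Submodule.norm_starProjection_apply_le _ x
    _ = (‖v - w‖ / ‖v‖ + ‖v - w‖ / ‖w‖) * ‖x‖ := by ring

lemma norm_reflection_orthogonal_span_singleton_sub_le {v w : E} (hv : 1 ≤ ‖v‖) (hw : 1 ≤ ‖w‖)
    (x : E) : ‖(𝕜 ∙ v)ᗮ.reflection x - (𝕜 ∙ w)ᗮ.reflection x‖ ≤ 4 * ‖v - w‖ * ‖x‖ := by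
  calc ‖(𝕜 ∙ v)ᗮ.reflection x - (𝕜 ∙ w)ᗮ.reflection x‖
      = 2 * ‖(𝕜 ∙ v).starProjection x - (𝕜 ∙ w).starProjection x‖ := by
        rw [Submodule.reflection_orthogonal_apply, Submodule.reflection_orthogonal_apply,
          Submodule.reflection_apply, Submodule.reflection_apply, neg_sub_neg,
          sub_sub_sub_cancel_right, ← smul_sub, norm_sub_rev, RCLike.norm_nsmul 𝕜,
          nsmul_eq_mul, Nat.cast_ofNat]
    _ ≤ 2 * ((‖v - w‖ / ‖v‖ + ‖v - w‖ / ‖w‖) * ‖x‖) := by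
        gcongr
        exact norm_starProjection_span_singleton_sub_le v w x
    _ ≤ 2 * ((‖v - w‖ + ‖v - w‖) * ‖x‖) := by
        gcongr
        · exact div_le_self (norm_nonneg _) hv
        · exact div_le_self (norm_nonneg _) hw
    _ = 4 * ‖v - w‖ * ‖x‖ := by ring

end LineProjection

section PiLp

variable {ι : Type*} [Fintype ι] {β : ι → Type*} [∀ i, SeminormedAddCommGroup (β i)]

lemma norm_ofLp_le {p : ENNReal} [Fact (1 ≤ p)] (x : PiLp p β) : ‖x.ofLp‖ ≤ ‖x‖ :=
  (pi_norm_le_iff_of_nonneg (norm_nonneg x)).2 (PiLp.norm_apply_le x)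

lemma norm_toLp_two_le_sqrt_card_mul (x : ∀ i, β i) :
    ‖WithLp.toLp 2 x‖ ≤ √(Fintype.card ι) * ‖x‖ := by
  simpa [Real.sqrt_eq_rpow] using (PiLp.lipschitzWith_toLp 2 β).norm_sub_le x 0

end PiLp

section StereographicFrame

variable {k : ℕ}

/-- The vector `(-1, z₁, …, z_k)`, normal to the hyperplane through the origin whose reflection
takes the pole `p` to `SP⁻¹(z)`. -/
def mirrorNormal (z : Fin k → ℝ) : EuclideanSpace ℝ (Fin (k + 1)) :=
  WithLp.toLp 2 (Fin.cons (-1) z)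

lemma norm_mirrorNormal_sq (z : Fin k → ℝ) : ‖mirrorNormal z‖ ^ 2 = 1 + ∑ j, z j ^ 2 := by
  simp [mirrorNormal, EuclideanSpace.norm_sq_eq, Fin.sum_univ_succ]

lemma one_le_norm_mirrorNormal (z : Fin k → ℝ) : 1 ≤ ‖mirrorNormal z‖ := by
  rw [← one_le_sq_iff₀ (norm_nonneg _), norm_mirrorNormal_sq, le_add_iff_nonneg_right]
  positivity

lemma norm_mirrorNormal_sub (z z' : Fin k → ℝ) :
    ‖mirrorNormal z - mirrorNormal z'‖ = ‖WithLp.toLp 2 (z - z')‖ := by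
  simp [mirrorNormal, EuclideanSpace.norm_eq, Fin.sum_univ_succ]

lemma reflection_mirrorNormal_single_succ (z : Fin k → ℝ) (i : Fin k) :
    (ℝ ∙ mirrorNormal z)ᗮ.reflection (EuclideanSpace.single i.succ 1) =
      EuclideanSpace.single i.succ 1 - (2 * z i / (1 + ∑ j, z j ^ 2)) • mirrorNormal z := by
  have h_inner : inner ℝ (mirrorNormal z) (EuclideanSpace.single i.succ 1) = z i := by
    simp [mirrorNormal, EuclideanSpace.inner_single_right]
  rw [Submodule.reflection_orthogonal_apply, Submodule.reflection_singleton_apply, h_inner,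
    RCLike.ofReal_real_eq_id, id, norm_mirrorNormal_sq, neg_sub, two_smul, ← add_smul,
    ← add_div, ← two_mul]

lemma SPinv_succ_mul_succ_div (z : Fin k → ℝ) (i j : Fin k) :
    SPinv z j.succ * SPinv z i.succ / (1 - SPinv z 0) = 2 * z i / (1 + ∑ l, z l ^ 2) * z j := by
  simp only [SPinv, Fin.cons_succ, Fin.cons_zero, sub_sub_cancel]
  field_simp

lemma tb_SPinv_eq_reflection (z : Fin k → ℝ) (i : Fin k) :
    tb (SPinv z) i =
      ((ℝ ∙ mirrorNormal z)ᗮ.reflection (EuclideanSpace.single i.succ 1)).ofLp := by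
  rw [reflection_mirrorNormal_single_succ]
  ext j
  cases j using Fin.cases with
  | zero => simp [tb, SPinv, mirrorNormal, div_mul_eq_mul_div]
  | succ j =>
    rcases eq_or_ne j i with rfl | hji
    · simp [tb, mirrorNormal, sq (SPinv _ _), SPinv_succ_mul_succ_div]
    · simp [tb, mirrorNormal, hji, neg_div, SPinv_succ_mul_succ_div]

end StereographicFrame

/-- For every `i ∈ {1, …, k}`, the map `z ↦ bᵢ(SP⁻¹(z))` is `20√k`-Lipschitz
w.r.t. the ℓ∞-norms (the default norm on `Fin n → ℝ`). -/
theorem basis_field_lipschitz (k : ℕ) (hk : 1 ≤ k) (i : Fin k)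
    (z z' : Fin k → ℝ) :
    ‖tb (SPinv z) i - tb (SPinv z') i‖ ≤ 20 * Real.sqrt k * ‖z - z'‖ := by
  set e : EuclideanSpace ℝ (Fin (k + 1)) := EuclideanSpace.single i.succ 1
  have he : ‖e‖ = 1 := by simp [e]
  calc ‖tb (SPinv z) i - tb (SPinv z') i‖
      = ‖((ℝ ∙ mirrorNormal z)ᗮ.reflection e - (ℝ ∙ mirrorNormal z')ᗮ.reflection e).ofLp‖ := by
        rw [tb_SPinv_eq_reflection, tb_SPinv_eq_reflection, WithLp.ofLp_sub]
    _ ≤ ‖(ℝ ∙ mirrorNormal z)ᗮ.reflection e - (ℝ ∙ mirrorNormal z')ᗮ.reflection e‖ :=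
        norm_ofLp_le _
    _ ≤ 4 * ‖mirrorNormal z - mirrorNormal z'‖ * ‖e‖ :=
        norm_reflection_orthogonal_span_singleton_sub_le (one_le_norm_mirrorNormal z)
          (one_le_norm_mirrorNormal z') e
    _ = 4 * ‖WithLp.toLp 2 (z - z')‖ := by rw [norm_mirrorNormal_sub, he, mul_one]
    _ ≤ 4 * (√k * ‖z - z'‖) := by
        gcongr
        simpa only [Fintype.card_fin] using norm_toLp_two_le_sqrt_card_mul (z - z')
    _ ≤ 20 * √k * ‖z - z'‖ := by
        rw [← mul_assoc]
        gcongr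
        norm_num

end
end

section
/- Let k ≥ 2 and let u^(1), ..., u^(k), w^(1), ..., w^(k) ∈ ℝ^k satisfy: ‖u^(i) − u^(j)‖∞ ≤ 1/(4√k) for all i, j; ‖u^(i) − w^(i)‖∞ ≤ 1/(4√k) for all i; ‖w^(i)‖₂ = 1 for all i; and for each i ∈ {1,...,k}, the i-th coordinate of u^(i) is < 0 and satisfies u^(i)_i ≤ u^(i)_ℓ for all ℓ ∈ {1,...,k}. Then w^(i)_ℓ ≤ 0 for all i, ℓ ∈ {1,...,k}. -/
/-!
Suppose `w i ℓ > 0`. The row `w ℓ` is then small. From below, its coordinates are controlled by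
`u ℓ ℓ`, the minimum of `u ℓ`, which lies close to `w i ℓ > 0`; from above, its `m`-th coordinate
lies close to `u m m < 0`. With proximity `1 / (4√k)` this gives `‖w ℓ‖∞ < 3 / (4√k)`, whereas an
`ℓ₂`-unit vector in `ℝᵏ` has `ℓ∞`-norm at least `1 / √k`.
-/

open Finset

noncomputable section

theorem l2_div_sqrt_le_norm {n : ℕ} (x : Fin n → ℝ) : l2 x / √n ≤ ‖x‖ := by
  refine div_le_of_le_mul₀ (Real.sqrt_nonneg _) (norm_nonneg x) ?_
  have hsq (i : Fin n) : x i ^ 2 ≤ ‖x‖ ^ 2 :=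
    sq_le_sq.2 <| (norm_le_pi_norm x i).trans (le_abs_self _)
  calc l2 x ≤ √(∑ _i : Fin n, ‖x‖ ^ 2) := Real.sqrt_le_sqrt <| sum_le_sum fun i _ => hsq i
    _ = ‖x‖ * √n := by
        rw [sum_const, card_univ, Fintype.card_fin, nsmul_eq_mul, mul_comm,
          Real.sqrt_mul (sq_nonneg _), Real.sqrt_sq (norm_nonneg x)]

section SupNorm

variable {ι : Type*} [Fintype ι] {u w : ι → ι → ℝ} {δ ε : ℝ}

theorem abs_apply_sub_apply_le {x y : ι → ℝ} (h : ‖x - y‖ ≤ ε) (i : ι) : |x i - y i| ≤ ε :=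
  (norm_le_pi_norm (x - y) i).trans h

theorem norm_lt_of_apply_pos {i ℓ : ι} (huu : ∀ j, ‖u ℓ - u j‖ ≤ δ)
    (huw : ∀ j, ‖u j - w j‖ ≤ ε) (hneg : ∀ j, u j j < 0) (hmin : ∀ m, u ℓ ℓ ≤ u ℓ m)
    (hpos : 0 < w i ℓ) : ‖w ℓ‖ < δ + 2 * ε := by
  have hε : 0 ≤ ε := (norm_nonneg _).trans (huw ℓ)
  have huu' (j m : ι) := abs_le.1 (abs_apply_sub_apply_le (huu j) m)
  have huw' (j m : ι) := abs_le.1 (abs_apply_sub_apply_le (huw j) m)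
  have hlower (m : ι) : -(δ + 2 * ε) < w ℓ m := by
    calc -(δ + 2 * ε) < w i ℓ - ε - δ - ε := by linarith
      _ ≤ u i ℓ - δ - ε := by linarith [(huw' i ℓ).1]
      _ ≤ u ℓ ℓ - ε := by linarith [(huu' i ℓ).1]
      _ ≤ u ℓ m - ε := by linarith [hmin m]
      _ ≤ w ℓ m := by linarith [(huw' ℓ m).2]
  have hupper (m : ι) : w ℓ m < δ + 2 * ε := by
    calc w ℓ m ≤ u ℓ m + ε := by linarith [(huw' ℓ m).1]
      _ ≤ u m m + δ + ε := by linarith [(huu' m m).2]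
      _ < δ + 2 * ε := by linarith [hneg m]
  have hradius : 0 < δ + 2 * ε := by linarith [hlower ℓ, hupper ℓ]
  exact (pi_norm_lt_iff hradius).2 fun m => abs_lt.2 ⟨hlower m, hupper m⟩

theorem door_facet_nonpos_general (huu : ∀ i j, ‖u i - u j‖ ≤ δ) (huw : ∀ i, ‖u i - w i‖ ≤ ε)
    (hw : ∀ i, δ + 2 * ε ≤ ‖w i‖) (hneg : ∀ i, u i i < 0) (hmin : ∀ i ℓ, u i i ≤ u i ℓ)
    (i ℓ : ι) : w i ℓ ≤ 0 :=
  not_lt.1 fun hpos =>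
    (norm_lt_of_apply_pos (huu ℓ) huw hneg (hmin ℓ) hpos).not_ge (hw ℓ)

end SupNorm

/-- If `u¹, …, u^k` are pairwise within `1/(4√k)` (ℓ∞), each `uⁱ` is within `1/(4√k)`
of a unit (ℓ₂) vector `wⁱ`, and the `i`-th coordinate of `uⁱ` is negative and minimal
among its coordinates, then all coordinates of all `wⁱ` are nonpositive. -/
theorem door_facet_nonpos (k : ℕ) (hk : 2 ≤ k)
    (u w : Fin k → (Fin k → ℝ))
    (huu : ∀ i j : Fin k, ‖u i - u j‖ ≤ 1 / (4 * Real.sqrt k))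
    (huw : ∀ i : Fin k, ‖u i - w i‖ ≤ 1 / (4 * Real.sqrt k))
    (hw : ∀ i : Fin k, l2 (w i) = 1)
    (hneg : ∀ i : Fin k, u i i < 0)
    (hmin : ∀ i ℓ : Fin k, u i i ≤ u i ℓ) :
    ∀ i ℓ : Fin k, w i ℓ ≤ 0 := by
  refine door_facet_nonpos_general huu huw (fun i => ?_) hneg hmin
  calc 1 / (4 * √k) + 2 * (1 / (4 * √k)) = 3 / 4 * (1 / √k) := by ring
    _ ≤ 1 / √k := mul_le_of_le_one_left (by positivity) (by norm_num)
    _ = l2 (w i) / √k := by rw [hw i]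
    _ ≤ ‖w i‖ := l2_div_sqrt_le_norm (w i)

end
end

section
/- Let k ≥ 2 be even and let Ĝ : B_k → ℝ^k be continuous with Ĝ(z) = −z whenever ‖z‖₂ ≥ 1/2, where B_k := {z ∈ ℝ^k : ‖z‖₂ ≤ 1}. Define F : S^k → ℝ^{k+1} as follows: for x = (x_0, x_1, ..., x_k) ∈ S^k, let x' := (x_1, ..., x_k), v := Ĝ(x'), α := max{0, min{1, 1/2 − x_0}}, and F(x) := α · Σ_{i=1}^k v_i b̂_i(x) + (1 − α) · Σ_{i=1}^k (−v_i) b̂_i(−x). Then F is continuous, ⟨F(x), x⟩ = 0 for every x ∈ S^k, and every zero of F yields a zero of Ĝ: if F(x) = 0 then Ĝ(x') = 0 (moreover, in that case |x_0| ≥ 1/2). -/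
open Finset

noncomputable section

/-- The closed unit ball `B_k` in `ℝ^k`. -/
def unitBall (k : ℕ) : Set (Fin k → ℝ) := {z | l2 z ≤ 1}

/-- The non-normalised tangent vector `b̂_i(x)`: `[b̂_i(x)]₀ = x_i (1 − x₀)`,
`[b̂_i(x)]_i = 1 − x₀ − x_i²`, and `[b̂_i(x)]_j = −x_j x_i` otherwise. -/
def tbhat {k : ℕ} (x : Fin (k + 1) → ℝ) (i : Fin k) : Fin (k + 1) → ℝ := fun j =>
  if j = 0 then x i.succ * (1 - x 0)
  else if j = i.succ then 1 - x 0 - (x i.succ) ^ 2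
  else -(x j) * x i.succ

/-!
Write `x'` for the tail of `x` and `T v x = Σᵢ vᵢ b̂ᵢ(x)`. In coordinates
`T v x = ((1 - x₀)⟨v, x'⟩, (1 - x₀) v - ⟨v, x'⟩ x')`, which is orthogonal to a unit vector `x`, and
for `x₀ ≠ 1` vanishes only if `v = 0`. Where `1/2 ≤ |x₀|` the cutoff `α` is `0` or `1`, so the glued
field is a single `T` and its zeros are zeros of `G`. Where `|x₀| < 1/2` its `0`-th coordinate is a
positive multiple of `⟨G x', x'⟩`, which is `-‖x'‖₂² ≠ 0` because `‖x'‖₂ > √3/2` there.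
-/

section InnerProduct

variable {n : ℕ}

lemma dotp_eq_dotProduct (x y : Fin n → ℝ) : dotp x y = x ⬝ᵥ y := rfl

lemma dotp_fin_succ (x y : Fin (n + 1) → ℝ) :
    dotp x y = x 0 * y 0 + dotp (Fin.tail x) (Fin.tail y) :=
  Fin.sum_univ_succ _

lemma l2_eq_sqrt_dotp_self (x : Fin n → ℝ) : l2 x = √(dotp x x) := by
  simp only [l2, dotp, sq]

lemma dotp_neg_self_ne_zero {z : Fin n → ℝ} (hz : 0 < l2 z) : dotp (-z) z ≠ 0 := by
  rw [l2_eq_sqrt_dotp_self, Real.sqrt_pos] at hz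
  rw [dotp_eq_dotProduct, neg_dotProduct]
  exact neg_ne_zero.mpr hz.ne'

end InnerProduct

section Sphere

variable {k : ℕ} {x : Fin (k + 1) → ℝ}

lemma mem_unitSphere_iff : x ∈ unitSphere k ↔ dotp x x = 1 := by
  rw [unitSphere, Set.mem_ofPred_eq, l2_eq_sqrt_dotp_self, Real.sqrt_eq_one]

lemma neg_mem_unitSphere (hx : x ∈ unitSphere k) : -x ∈ unitSphere k := by
  rw [mem_unitSphere_iff] at hx ⊢
  rwa [dotp_eq_dotProduct, neg_dotProduct_neg]

lemma l2_tail_of_mem_unitSphere (hx : x ∈ unitSphere k) : l2 (Fin.tail x) = √(1 - x 0 ^ 2) := by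
  rw [mem_unitSphere_iff, dotp_fin_succ] at hx
  rw [l2_eq_sqrt_dotp_self, ← hx]
  ring_nf

lemma tail_mem_unitBall (hx : x ∈ unitSphere k) : Fin.tail x ∈ unitBall k := by
  rw [unitBall, Set.mem_ofPred_eq, l2_tail_of_mem_unitSphere hx, Real.sqrt_le_one]
  exact sub_le_self 1 (sq_nonneg _)

lemma sqrt_three_div_two_lt_l2_tail (hx : x ∈ unitSphere k) (h : |x 0| < 1 / 2) :
    √3 / 2 < l2 (Fin.tail x) := by
  have hsq : x 0 ^ 2 < (1 / 2) ^ 2 := sq_lt_sq' (abs_lt.mp h).1 (abs_lt.mp h).2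
  rw [l2_tail_of_mem_unitSphere hx]
  apply Real.lt_sqrt_of_sq_lt
  rw [div_pow, Real.sq_sqrt zero_le_three]
  linarith

end Sphere

section TangentField

variable {k : ℕ} (v : Fin k → ℝ) (x : Fin (k + 1) → ℝ)

lemma tbhat_succ (i j : Fin k) :
    tbhat x i j.succ = (if j = i then 1 - x 0 else 0) - x j.succ * x i.succ := by
  by_cases hji : j = i
  · subst hji
    simp only [tbhat, Fin.succ_ne_zero, if_false, if_true]
    ring
  · simp only [tbhat, Fin.succ_ne_zero, Fin.succ_inj, hji, if_false]
    ring

lemma continuous_tbhat (i : Fin k) : Continuous fun y : Fin (k + 1) → ℝ => tbhat y i := by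
  refine continuous_pi fun j => ?_
  unfold tbhat
  split_ifs <;> fun_prop

/-- The combination `Σᵢ vᵢ b̂ᵢ(x)`, which transports a vector `v ∈ ℝ^k` to the tangent space of the
sphere at `x`. It is defined for every `x ∈ ℝ^{k+1}`, on the sphere or not. -/
def tangentField : Fin (k + 1) → ℝ := ∑ i, v i • tbhat x i

lemma tangentField_zero : tangentField v x 0 = (1 - x 0) * dotp v (Fin.tail x) := by
  simp only [tangentField, dotp, Fin.tail, Finset.sum_apply, Pi.smul_apply, smul_eq_mul, tbhat,
    if_true, Finset.mul_sum]
  exact Finset.sum_congr rfl fun i _ => by ring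

lemma tail_tangentField :
    Fin.tail (tangentField v x) = (1 - x 0) • v - dotp v (Fin.tail x) • Fin.tail x := by
  ext j
  have hterm (i : Fin k) : v i * tbhat x i j.succ =
      (if j = i then (1 - x 0) * v i else 0) - v i * x i.succ * x j.succ := by
    rw [tbhat_succ]
    split_ifs <;> ring
  simp only [tangentField, dotp, Fin.tail, Finset.sum_apply, Pi.smul_apply, Pi.sub_apply,
    smul_eq_mul, hterm, Finset.sum_sub_distrib, Finset.sum_ite_eq, Finset.mem_univ, if_true,
    Finset.sum_mul]

lemma dotp_tangentField :
    dotp (tangentField v x) x = dotp v (Fin.tail x) * (1 - dotp x x) := by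
  rw [dotp_fin_succ, tangentField_zero, tail_tangentField, dotp_fin_succ x x]
  simp only [dotp_eq_dotProduct, sub_dotProduct, smul_dotProduct, smul_eq_mul]
  ring

lemma dotp_tangentField_of_mem_unitSphere {x : Fin (k + 1) → ℝ} (hx : x ∈ unitSphere k) :
    dotp (tangentField v x) x = 0 := by
  rw [dotp_tangentField, mem_unitSphere_iff.mp hx, sub_self, mul_zero]

lemma eq_zero_of_tangentField_eq_zero {v : Fin k → ℝ} {x : Fin (k + 1) → ℝ} (hx : x 0 ≠ 1)
    (h : tangentField v x = 0) : v = 0 := by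
  have hx' : 1 - x 0 ≠ 0 := sub_ne_zero.mpr hx.symm
  have hdot : dotp v (Fin.tail x) = 0 := by
    have h0 := tangentField_zero v x
    rw [h, Pi.zero_apply] at h0
    exact (mul_eq_zero.mp h0.symm).resolve_left hx'
  have htail : (0 : Fin k → ℝ) = (1 - x 0) • v := by
    have ht := tail_tangentField v x
    rwa [h, hdot, zero_smul, sub_zero] at ht
  exact (smul_eq_zero.mp htail.symm).resolve_left hx'

lemma continuous_tangentField :
    Continuous fun p : (Fin k → ℝ) × (Fin (k + 1) → ℝ) => tangentField p.1 p.2 :=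
  continuous_finsetSum _ fun i _ =>
    ((continuous_apply i).comp continuous_fst).smul ((continuous_tbhat i).comp continuous_snd)

end TangentField

section Cutoff

/-- The weight `α = max {0, min {1, 1/2 - t}}` of the gluing, as a function of the height
`t = x₀`. -/
def cutoff (t : ℝ) : ℝ := max 0 (min 1 (1 / 2 - t))

lemma continuous_cutoff : Continuous cutoff := by
  unfold cutoff
  fun_prop

lemma cutoff_nonneg (t : ℝ) : 0 ≤ cutoff t := le_max_left _ _

lemma cutoff_le_one (t : ℝ) : cutoff t ≤ 1 := max_le zero_le_one (min_le_left _ _)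

lemma cutoff_of_half_le {t : ℝ} (ht : 1 / 2 ≤ t) : cutoff t = 0 :=
  max_eq_left ((min_le_right _ _).trans (sub_nonpos.mpr ht))

lemma cutoff_of_le_neg_half {t : ℝ} (ht : t ≤ -(1 / 2)) : cutoff t = 1 := by
  rw [cutoff, min_eq_left (by linarith), max_eq_right zero_le_one]

end Cutoff

section GluedField

variable {k : ℕ} {G : (Fin k → ℝ) → (Fin k → ℝ)} {x : Fin (k + 1) → ℝ}

/-- The field `F` on `S^k` glued from two copies of `G` by means of `cutoff`. The projection `x'` of
`x` to `ℝ^k` is encoded as `Fin.tail x`. -/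
def gluedField (G : (Fin k → ℝ) → (Fin k → ℝ)) (x : Fin (k + 1) → ℝ) : Fin (k + 1) → ℝ :=
  cutoff (x 0) • tangentField (G (Fin.tail x)) x
    + (1 - cutoff (x 0)) • tangentField (-G (Fin.tail x)) (-x)

lemma continuousOn_gluedField (hG : ContinuousOn G (unitBall k)) :
    ContinuousOn (gluedField G) (unitSphere k) := by
  have htail : Continuous (Fin.tail : (Fin (k + 1) → ℝ) → Fin k → ℝ) :=
    continuous_pi fun i => continuous_apply i.succ
  have hGtail : ContinuousOn (fun x : Fin (k + 1) → ℝ => G (Fin.tail x)) (unitSphere k) :=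
    hG.comp htail.continuousOn fun _ => tail_mem_unitBall
  have hα : ContinuousOn (fun x : Fin (k + 1) → ℝ => cutoff (x 0)) (unitSphere k) :=
    (continuous_cutoff.comp (continuous_apply 0)).continuousOn
  exact (hα.smul (continuous_tangentField.comp_continuousOn (hGtail.prodMk continuousOn_id))).add
    ((continuousOn_const.sub hα).smul
      (continuous_tangentField.comp_continuousOn (hGtail.neg.prodMk continuousOn_id.neg)))

lemma dotp_gluedField (G : (Fin k → ℝ) → (Fin k → ℝ)) (hx : x ∈ unitSphere k) :
    dotp (gluedField G x) x = 0 := by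
  have hpos := dotp_tangentField_of_mem_unitSphere (G (Fin.tail x)) hx
  have hneg := dotp_tangentField_of_mem_unitSphere (-G (Fin.tail x)) (neg_mem_unitSphere hx)
  rw [dotp_eq_dotProduct] at hpos hneg
  rw [dotProduct_neg, neg_eq_zero] at hneg
  rw [dotp_eq_dotProduct, gluedField, add_dotProduct, smul_dotProduct, smul_dotProduct, hpos, hneg,
    smul_zero, smul_zero, add_zero]

lemma gluedField_zero (G : (Fin k → ℝ) → (Fin k → ℝ)) (x : Fin (k + 1) → ℝ) :
    gluedField G x 0 = (cutoff (x 0) * (1 - x 0) + (1 - cutoff (x 0)) * (1 + x 0)) *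
      dotp (G (Fin.tail x)) (Fin.tail x) := by
  have hneg : dotp (-G (Fin.tail x)) (Fin.tail (-x)) = dotp (G (Fin.tail x)) (Fin.tail x) :=
    neg_dotProduct_neg _ _
  simp only [gluedField, Pi.add_apply, Pi.smul_apply, smul_eq_mul, tangentField_zero, hneg,
    Pi.neg_apply]
  ring

lemma dotp_eq_zero_of_gluedField_eq_zero (hx : |x 0| < 1) (h : gluedField G x = 0) :
    dotp (G (Fin.tail x)) (Fin.tail x) = 0 := by
  obtain ⟨hlo, hhi⟩ := abs_lt.mp hx
  have hcoeff : 0 < cutoff (x 0) * (1 - x 0) + (1 - cutoff (x 0)) * (1 + x 0) :=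
    convex_Ioi (0 : ℝ) (Set.mem_Ioi.mpr (by linarith)) (Set.mem_Ioi.mpr (by linarith))
      (cutoff_nonneg _) (sub_nonneg.mpr (cutoff_le_one _)) (add_sub_cancel _ _)
  have h0 := gluedField_zero G x
  rw [h, Pi.zero_apply] at h0
  exact (mul_eq_zero.mp h0.symm).resolve_left hcoeff.ne'

lemma eq_zero_of_gluedField_eq_zero (hx : 1 / 2 ≤ |x 0|) (h : gluedField G x = 0) :
    G (Fin.tail x) = 0 := by
  rcases le_abs.mp hx with hnorth | hsouth
  · rw [gluedField, cutoff_of_half_le hnorth, zero_smul, zero_add, sub_zero, one_smul] at h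
    have hne : (-x) 0 ≠ 1 := by
      rw [Pi.neg_apply]
      linarith
    exact neg_eq_zero.mp (eq_zero_of_tangentField_eq_zero hne h)
  · rw [gluedField, cutoff_of_le_neg_half (le_neg.mpr hsouth), sub_self, zero_smul, add_zero,
      one_smul] at h
    exact eq_zero_of_tangentField_eq_zero (by linarith) h

theorem glued_field_zeros_general (hGcont : ContinuousOn G (unitBall k))
    (hG : ∀ z ∈ unitBall k, √3 / 2 < l2 z → dotp (G z) z ≠ 0) :
    ContinuousOn (gluedField G) (unitSphere k) ∧
    (∀ x ∈ unitSphere k, dotp (gluedField G x) x = 0) ∧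
    (∀ x ∈ unitSphere k, gluedField G x = 0 → G (Fin.tail x) = 0 ∧ 1 / 2 ≤ |x 0|) := by
  refine ⟨continuousOn_gluedField hGcont, fun x hx => dotp_gluedField G hx, fun x hx h => ?_⟩
  have hheight : 1 / 2 ≤ |x 0| := by
    by_contra! hlt
    exact hG _ (tail_mem_unitBall hx) (sqrt_three_div_two_lt_l2_tail hx hlt)
      (dotp_eq_zero_of_gluedField_eq_zero (hlt.trans one_half_lt_one) h)
  exact ⟨eq_zero_of_gluedField_eq_zero hheight h, hheight⟩

lemma dotp_ne_zero_of_eq_neg (hGout : ∀ z ∈ unitBall k, 1 / 2 ≤ l2 z → G z = -z) :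
    ∀ z ∈ unitBall k, √3 / 2 < l2 z → dotp (G z) z ≠ 0 := by
  intro z hz hlt
  have hhalf : 1 / 2 ≤ l2 z := by
    have h3 : 1 ≤ √3 := Real.one_le_sqrt.mpr (by norm_num)
    linarith
  rw [hGout z hz hhalf]
  exact dotp_neg_self_ne_zero (one_half_pos.trans_le hhalf)

end GluedField

/-- Gluing two copies of a Brouwer-type field into a Hairy Ball field: given
continuous `Ĝ : B_k → ℝ^k` with `Ĝ(z) = −z` for `‖z‖₂ ≥ 1/2`, the field
`F(x) = α Σᵢ vᵢ b̂ᵢ(x) + (1 − α) Σᵢ (−vᵢ) b̂ᵢ(−x)` (with `x' = (x₁, …, x_k)`,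
`v = Ĝ(x')`, `α = max{0, min{1, 1/2 − x₀}}`) is a continuous tangent vector field
on `S^k`, and every zero `x` of `F` satisfies `Ĝ(x') = 0` and `|x₀| ≥ 1/2`. -/
theorem glued_field_zeros (k : ℕ) (hk : 2 ≤ k) (hkeven : Even k)
    (G : (Fin k → ℝ) → (Fin k → ℝ))
    (hGcont : ContinuousOn G (unitBall k))
    (hGout : ∀ z ∈ unitBall k, 1 / 2 ≤ l2 z → G z = -z)
    (F : (Fin (k + 1) → ℝ) → (Fin (k + 1) → ℝ))
    (hF : ∀ x : Fin (k + 1) → ℝ,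
      F x = max 0 (min 1 (1 / 2 - x 0)) •
              (∑ i : Fin k, G (fun m => x m.succ) i • tbhat x i)
          + (1 - max 0 (min 1 (1 / 2 - x 0))) •
              (∑ i : Fin k, (-(G (fun m => x m.succ) i)) • tbhat (-x) i)) :
    ContinuousOn F (unitSphere k) ∧
    (∀ x ∈ unitSphere k, dotp (F x) x = 0) ∧
    (∀ x ∈ unitSphere k, F x = 0 →
      G (fun m => x m.succ) = 0 ∧ 1 / 2 ≤ |x 0|) := by
  obtain rfl : F = gluedField G := funext hF
  exact glued_field_zeros_general hGcont (dotp_ne_zero_of_eq_neg hGout)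

end
end

section
/- Totality of 2D-Variant-Brouwer: Let N ≥ 2 be an integer and let C : {1,...,N} × {1,...,N} → {(1,0), (−1,0), (0,1), (0,−1)} satisfy the boundary conditions C(1,a) = (1,0), C(N,b) = (−1,0), C(b,1) = (0,1), and C(a,N) = (0,−1) for all a ∈ {2,...,N} and all b ∈ {1,...,N−1}. Then there exist cells x, y ∈ {1,...,N} × {1,...,N} with ‖x − y‖∞ ≤ 1 and C(x) + C(y) = (0,0), i.e., two adjacent cells (adjacency including diagonal adjacency, or x = y is excluded automatically since no arrow is its own negative) carrying opposite arrows. -/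
/-!
Two of three pairwise non-opposite arrows coincide, so the turns of the arrows around a triangle
cancel if no two of its vertices carry opposite arrows. Cut every unit square of the grid into two
triangles along its main diagonal. If no edge of this triangulation joined opposite arrows, the
turns along the boundary of the grid would cancel as well, by the discrete Green's theorem; but the
prescribed arrows make four quarter turns counterclockwise along the boundary.
-/

open Finset

/-- The four unit vectors of `ℤ²` along the coordinate axes, the values of the colouring. -/
def IsArrow (u : ℤ × ℤ) : Prop :=
  u = (1, 0) ∨ u = (-1, 0) ∨ u = (0, 1) ∨ u = (0, -1)

/-- The turn from `u` to `v`, encoded as their cross product. For arrows that are not opposite it is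
the number of quarter turns, counted positively counterclockwise; opposite arrows get the junk
value `0`. -/
def turn (u v : ℤ × ℤ) : ℤ := u.1 * v.2 - u.2 * v.1

lemma turn_self (u : ℤ × ℤ) : turn u u = 0 := by
  unfold turn
  ring

lemma turn_add_turn_swap (u v : ℤ × ℤ) : turn u v + turn v u = 0 := by
  unfold turn
  ring

lemma IsArrow.eq_or_add_eq_zero {u v : ℤ × ℤ} (hu : IsArrow u) (hv : IsArrow v)
    (haxis : u.1 = 0 ↔ v.1 = 0) : u = v ∨ u + v = 0 := by
  rcases hu with rfl | rfl | rfl | rfl <;> rcases hv with rfl | rfl | rfl | rfl <;> simp_all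

lemma IsArrow.eq_or_eq_or_eq {u v w : ℤ × ℤ} (hu : IsArrow u) (hv : IsArrow v) (hw : IsArrow w)
    (huv : u + v ≠ 0) (hvw : v + w ≠ 0) (huw : u + w ≠ 0) : u = v ∨ v = w ∨ u = w := by
  have same_axis : (u.1 = 0 ↔ v.1 = 0) ∨ (v.1 = 0 ↔ w.1 = 0) ∨ (u.1 = 0 ↔ w.1 = 0) := by tauto
  rcases same_axis with h | h | h
  · exact .inl ((hu.eq_or_add_eq_zero hv h).resolve_right huv)
  · exact .inr (.inl ((hv.eq_or_add_eq_zero hw h).resolve_right hvw))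
  · exact .inr (.inr ((hu.eq_or_add_eq_zero hw h).resolve_right huw))

lemma turn_add_turn {u v w : ℤ × ℤ} (hu : IsArrow u) (hv : IsArrow v) (hw : IsArrow w)
    (huv : u + v ≠ 0) (hvw : v + w ≠ 0) (huw : u + w ≠ 0) :
    turn u v + turn v w = turn u w := by
  rcases hu.eq_or_eq_or_eq hv hw huv hvw huw with rfl | rfl | rfl
  · rw [turn_self, zero_add]
  · rw [turn_self, add_zero]
  · rw [turn_self, turn_add_turn_swap]

lemma sum_turn_of_forall_Ico_eq {f : ℕ → ℤ × ℤ} {u : ℤ × ℤ} {a b : ℕ} (hab : a ≤ b)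
    (hf : ∀ i ∈ Ico a b, f i = u) :
    ∑ i ∈ Ico a b, turn (f i) (f (i + 1)) = turn u (f b) - turn u (f a) := by
  rw [← sum_Ico_sub (fun i => turn u (f i)) hab]
  refine sum_congr rfl fun i hi => ?_
  rw [hf i hi, turn_self, sub_zero]

lemma sum_turn_of_forall_Ioc_eq {f : ℕ → ℤ × ℤ} {u : ℤ × ℤ} {a b : ℕ} (hab : a ≤ b)
    (hf : ∀ i ∈ Ioc a b, f i = u) :
    ∑ i ∈ Ico a b, turn (f i) (f (i + 1)) = turn (f a) u - turn (f b) u := by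
  rw [← neg_sub, ← sum_Ico_sub (fun i => turn (f i) u) hab, ← sum_neg_distrib]
  refine sum_congr rfl fun i hi => ?_
  have hi' := mem_Ico.1 hi
  rw [hf (i + 1) (mem_Ioc.2 ⟨by omega, hi'.2⟩), turn_self, zero_sub, neg_neg]

/-- Discrete Green's theorem. The values `h i j` and `v i j` live on the horizontal and the vertical
edge with lower left end `(i, j)`. -/
lemma sum_boundary_eq_of_closed {G : Type*} [AddCommGroup G] {h v : ℕ → ℕ → G} {a b c d : ℕ}
    (hab : a ≤ b) (hcd : c ≤ d)
    (closed : ∀ i ∈ Ico a b, ∀ j ∈ Ico c d, h i (j + 1) - h i j = v (i + 1) j - v i j) :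
    ∑ i ∈ Ico a b, h i d - ∑ i ∈ Ico a b, h i c =
      ∑ j ∈ Ico c d, v b j - ∑ j ∈ Ico c d, v a j := by
  rw [← sum_sub_distrib, ← sum_sub_distrib]
  calc ∑ i ∈ Ico a b, (h i d - h i c)
      = ∑ i ∈ Ico a b, ∑ j ∈ Ico c d, (h i (j + 1) - h i j) :=
        sum_congr rfl fun i _ => (sum_Ico_sub (h i) hcd).symm
    _ = ∑ i ∈ Ico a b, ∑ j ∈ Ico c d, (v (i + 1) j - v i j) :=
        sum_congr rfl fun i hi => sum_congr rfl fun j hj => closed i hi j hj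
    _ = ∑ j ∈ Ico c d, ∑ i ∈ Ico a b, (v (i + 1) j - v i j) := sum_comm
    _ = ∑ j ∈ Ico c d, (v b j - v a j) :=
        sum_congr rfl fun j _ => sum_Ico_sub (fun i => v i j) hab

lemma sum_turn_boundary_eq {C : ℕ × ℕ → ℤ × ℤ} {a b c d : ℕ} (hab : a ≤ b) (hcd : c ≤ d)
    (harrow : ∀ x, (a, c) ≤ x → x ≤ (b, d) → IsArrow (C x))
    (hne : ∀ x y, (a, c) ≤ x → x ≤ y → y ≤ x + 1 → y ≤ (b, d) → C x + C y ≠ 0) :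
    ∑ i ∈ Ico a b, turn (C (i, d)) (C (i + 1, d)) - ∑ i ∈ Ico a b, turn (C (i, c)) (C (i + 1, c)) =
      ∑ j ∈ Ico c d, turn (C (b, j)) (C (b, j + 1)) -
        ∑ j ∈ Ico c d, turn (C (a, j)) (C (a, j + 1)) := by
  refine sum_boundary_eq_of_closed (h := fun i j => turn (C (i, j)) (C (i + 1, j)))
    (v := fun i j => turn (C (i, j)) (C (i, j + 1))) hab hcd fun i hi j hj => ?_
  rw [mem_Ico] at hi hj
  have triangle : ∀ y, (i, j) ≤ y → y ≤ (i + 1, j + 1) →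
      turn (C (i, j)) (C y) + turn (C y) (C (i + 1, j + 1)) =
        turn (C (i, j)) (C (i + 1, j + 1)) := by
    have hlow : (a, c) ≤ (i, j) := ⟨hi.1, hj.1⟩
    have hupp : (i + 1, j + 1) ≤ (b, d) := ⟨hi.2, hj.2⟩
    have hdiag : (i, j) ≤ (i + 1, j + 1) := ⟨i.le_succ, j.le_succ⟩
    intro y hy hy'
    exact turn_add_turn (harrow _ hlow (hdiag.trans hupp))
      (harrow _ (hlow.trans hy) (hy'.trans hupp)) (harrow _ (hlow.trans hdiag) hupp)
      (hne _ _ hlow hy hy' (hy'.trans hupp))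
      (hne _ _ (hlow.trans hy) hy' (add_le_add_left hy 1) hupp)
      (hne _ _ hlow hdiag le_rfl hupp)
  have lower := triangle (i + 1, j) ⟨i.le_succ, le_rfl⟩ ⟨le_rfl, j.le_succ⟩
  have upper := triangle (i, j + 1) ⟨le_rfl, j.le_succ⟩ ⟨i.le_succ, le_rfl⟩
  linarith

theorem variant_brouwer_total_general {M N : ℕ} (hM : 2 ≤ M) (hN : 2 ≤ N) {C : ℕ × ℕ → ℤ × ℤ}
    (harrow : ∀ x, 1 ≤ x → x ≤ (M, N) → IsArrow (C x))
    (hleft : ∀ j, 2 ≤ j → j ≤ N → C (1, j) = (1, 0))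
    (hright : ∀ j, 1 ≤ j → j ≤ N - 1 → C (M, j) = (-1, 0))
    (hbottom : ∀ i, 1 ≤ i → i ≤ M - 1 → C (i, 1) = (0, 1))
    (htop : ∀ i, 2 ≤ i → i ≤ M → C (i, N) = (0, -1)) :
    ∃ x y, 1 ≤ x ∧ x ≤ y ∧ y ≤ x + 1 ∧ y ≤ (M, N) ∧ C x + C y = 0 := by
  by_contra! hne
  have green := sum_turn_boundary_eq (by omega) (by omega) harrow hne
  have left := sum_turn_of_forall_Ioc_eq (f := fun j => C (1, j)) (a := 1) (b := N) (by omega)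
    fun j hj => hleft j (mem_Ioc.1 hj).1 (mem_Ioc.1 hj).2
  have right := sum_turn_of_forall_Ico_eq (f := fun j => C (M, j)) (a := 1) (b := N) (by omega)
    fun j hj => hright j (mem_Ico.1 hj).1 (Nat.le_sub_one_of_lt (mem_Ico.1 hj).2)
  have bottom := sum_turn_of_forall_Ico_eq (f := fun i => C (i, 1)) (a := 1) (b := M) (by omega)
    fun i hi => hbottom i (mem_Ico.1 hi).1 (Nat.le_sub_one_of_lt (mem_Ico.1 hi).2)
  have top := sum_turn_of_forall_Ioc_eq (f := fun i => C (i, N)) (a := 1) (b := M) (by omega)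
    fun i hi => htop i (mem_Ioc.1 hi).1 (mem_Ioc.1 hi).2
  rw [left, right, bottom, top, hbottom 1 le_rfl (by omega), hright 1 le_rfl (by omega),
    htop M hM le_rfl, hleft N hN le_rfl] at green
  norm_num [turn] at green

lemma max_abs_sub_le_one_of_le_of_le_add_one {x y : ℕ × ℕ} (hxy : x ≤ y) (hyx : y ≤ x + 1) :
    max |(x.1 : ℤ) - (y.1 : ℤ)| |(x.2 : ℤ) - (y.2 : ℤ)| ≤ 1 := by
  obtain ⟨⟨h₁, h₂⟩, h₁', h₂'⟩ := And.intro hxy hyx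
  simp only [Prod.fst_add, Prod.snd_add, Prod.fst_one, Prod.snd_one] at h₁' h₂'
  exact max_le (abs_le.2 (by omega)) (abs_le.2 (by omega))

/-- Totality of 2D-Variant-Brouwer: a colouring of the `N × N` grid
(`N ≥ 2`) by the four arrows `(1,0), (−1,0), (0,1), (0,−1)` satisfying the
boundary conditions `C(1,a) = (1,0)`, `C(N,b) = (−1,0)`, `C(b,1) = (0,1)`,
`C(a,N) = (0,−1)` for `a ∈ {2,…,N}` and `b ∈ {1,…,N−1}` must contain two
adjacent cells (ℓ∞-distance at most 1, diagonal adjacency included) carrying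
opposite arrows. -/
theorem variant_brouwer_total (N : ℕ) (hN : 2 ≤ N)
    (C : ℕ × ℕ → ℤ × ℤ)
    (hrange : ∀ x : ℕ × ℕ, 1 ≤ x.1 → x.1 ≤ N → 1 ≤ x.2 → x.2 ≤ N →
      C x = (1, 0) ∨ C x = (-1, 0) ∨ C x = (0, 1) ∨ C x = (0, -1))
    (hleft : ∀ a : ℕ, 2 ≤ a → a ≤ N → C (1, a) = (1, 0))
    (hright : ∀ b : ℕ, 1 ≤ b → b ≤ N - 1 → C (N, b) = (-1, 0))
    (hbottom : ∀ b : ℕ, 1 ≤ b → b ≤ N - 1 → C (b, 1) = (0, 1))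
    (htop : ∀ a : ℕ, 2 ≤ a → a ≤ N → C (a, N) = (0, -1)) :
    ∃ x y : ℕ × ℕ,
      1 ≤ x.1 ∧ x.1 ≤ N ∧ 1 ≤ x.2 ∧ x.2 ≤ N ∧
      1 ≤ y.1 ∧ y.1 ≤ N ∧ 1 ≤ y.2 ∧ y.2 ≤ N ∧
      max |(x.1 : ℤ) - (y.1 : ℤ)| |(x.2 : ℤ) - (y.2 : ℤ)| ≤ 1 ∧
      C x + C y = 0 := by
  obtain ⟨x, y, hx, hxy, hyx, hy, hC⟩ := variant_brouwer_total_general hN hN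
    (fun x hx hxN => hrange x hx.1 hxN.1 hx.2 hxN.2) hleft hright hbottom htop
  exact ⟨x, y, hx.1, (hxy.trans hy).1, hx.2, (hxy.trans hy).2, (hx.trans hxy).1, hy.1,
    (hx.trans hxy).2, hy.2, max_abs_sub_le_one_of_le_of_le_add_one hxy hyx, hC⟩
end
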